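/- arXiv:1607.05035 — 2 statements merged into one kernel-verified Lean document; each statement's English description precedes it below -/
import Mathlib

section
/- The spline space S has dimension dim S = m + p, and the subspace S_0 satisfies dim S_0 ≥ dim S − p. Moreover, if p + 1 ≤ m, then dim S_0 = m + p − 2⌊p/2⌋ exactly. -/
noncomputable section

open MeasureTheory Set

namespace SplineMG

/-- The `j`-th piece of the uniform partition of `[0,1]` into `m` subintervals of
length `h = 1/m`; the first and last pieces are extended to `-∞` resp. `+∞`
(the spline is extended polynomially outside `[0,1]`). -/
def pieceSet (m j : ℕ) : Set ℝ :=
  (if j = 0 then Iic ((1 : ℝ) / m) else Icc ((j : ℝ) / m) (((j : ℝ) + 1) / m)) ∪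
  (if j = m - 1 then Ici (((m : ℝ) - 1) / m) else ∅)

/-- `u : ℝ → ℝ` belongs to the univariate spline space `S` of degree `p` and maximal
smoothness `C^{p-1}` on the uniform partition of `(0,1)` into `m` intervals of
length `h = 1/m`. -/
def IsSpline (m p : ℕ) (u : ℝ → ℝ) : Prop :=
  ContDiffOn ℝ (p - 1 : ℕ) u (Ioo (0 : ℝ) 1) ∧
  ∀ j < m, ∃ q : Polynomial ℝ, q.natDegree ≤ p ∧ ∀ x ∈ pieceSet m j, u x = q.eval x

/-- `u` belongs to the subspace `S₀` of `S`: all odd derivatives of order `< p`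
vanish at both endpoints. -/
def IsSpline0 (m p : ℕ) (u : ℝ → ℝ) : Prop :=
  IsSpline m p u ∧
  ∀ l : ℕ, 2 * l + 1 < p →
    iteratedDeriv (2 * l + 1) u 0 = 0 ∧ iteratedDeriv (2 * l + 1) u 1 = 0

/-- The `L²(0,1)` inner product. -/
def ip0 (u v : ℝ → ℝ) : ℝ := ∫ x in Ioo (0 : ℝ) 1, u x * v x

/-- The squared `L²(0,1)` norm `‖u‖₀²`. -/
def l2normSq (u : ℝ → ℝ) : ℝ := ∫ x in Ioo (0 : ℝ) 1, u x ^ 2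

/-- The `L²(0,1)` norm `‖u‖₀`. -/
def l2norm (u : ℝ → ℝ) : ℝ := Real.sqrt (l2normSq u)

/-- The squared `H¹(0,1)` seminorm `|u|₁²`. -/
def h1semiSq (u : ℝ → ℝ) : ℝ := ∫ x in Ioo (0 : ℝ) 1, deriv u x ^ 2

/-- The `H¹(0,1)` seminorm `|u|₁`. -/
def h1semi (u : ℝ → ℝ) : ℝ := Real.sqrt (h1semiSq u)

/-- The squared full `H¹(0,1)` norm. -/
def h1normSq (u : ℝ → ℝ) : ℝ := l2normSq u + h1semiSq u

/-- `u` belongs to `S₁`, the `L²(0,1)`-orthogonal complement of `S₀` in `S`. -/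
def IsSpline1 (m p : ℕ) (u : ℝ → ℝ) : Prop :=
  IsSpline m p u ∧ ∀ v, IsSpline0 m p v → ip0 u v = 0

/-- `v = Q₀ u` is the `L²(0,1)`-orthogonal projection of `u` onto `S₀`. -/
def IsL2Proj0 (m p : ℕ) (u v : ℝ → ℝ) : Prop :=
  IsSpline0 m p v ∧ ∀ w, IsSpline0 m p w → ip0 (u - v) w = 0

/-- The component predicate: `false ↦ S₀`, `true ↦ S₁`. -/
def IsSplineC (m p : ℕ) : Bool → (ℝ → ℝ) → Prop
  | false => IsSpline0 m p
  | true => IsSpline1 m p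

/-- The tensor-product spline space `S^d = S ⊗ ⋯ ⊗ S` on `(0,1)^d`. -/
def TensorSpline (d m p : ℕ) : Submodule ℝ ((Fin d → ℝ) → ℝ) :=
  Submodule.span ℝ {u | ∃ f : Fin d → ℝ → ℝ, (∀ i, IsSpline m p (f i)) ∧
    u = fun x => ∏ i, f i (x i)}

/-- The subspace `S_α = S_{α₁} ⊗ ⋯ ⊗ S_{α_d}` of `S^d`, for `α ∈ {0,1}^d`
(`false ↦ 0`, `true ↦ 1`). -/
def TensorSplineSub (d m p : ℕ) (α : Fin d → Bool) : Submodule ℝ ((Fin d → ℝ) → ℝ) :=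
  Submodule.span ℝ {u | ∃ f : Fin d → ℝ → ℝ, (∀ i, IsSplineC m p (α i) (f i)) ∧
    u = fun x => ∏ i, f i (x i)}

/-- The open unit cube `Ω = (0,1)^d`. -/
def cube (d : ℕ) : Set (Fin d → ℝ) := Set.univ.pi fun _ => Ioo (0 : ℝ) 1

/-- The `i`-th partial derivative. -/
def pd (d : ℕ) (i : Fin d) (u : (Fin d → ℝ) → ℝ) : (Fin d → ℝ) → ℝ :=
  fun x => deriv (fun t => u (Function.update x i t)) (x i)

/-- The `L²(Ω)` inner product on the unit cube. -/
def ipd (d : ℕ) (u v : (Fin d → ℝ) → ℝ) : ℝ := ∫ x in cube d, u x * v x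

/-- The squared `L²(Ω)` norm. -/
def l2normSqD (d : ℕ) (u : (Fin d → ℝ) → ℝ) : ℝ := ∫ x in cube d, u x ^ 2

/-- The bilinear form `a(u,v) = ∫_Ω (∇u·∇v + uv) dx`. -/
def aForm (d : ℕ) (u v : (Fin d → ℝ) → ℝ) : ℝ :=
  ∫ x in cube d, (∑ i, pd d i u x * pd d i v x) + u x * v x

/-- The squared `H¹(Ω)` seminorm. -/
def h1semiSqD (d : ℕ) (u : (Fin d → ℝ) → ℝ) : ℝ :=
  ∫ x in cube d, ∑ i, pd d i u x ^ 2

/-- The squared full `H¹(Ω)` norm. -/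
def h1normSqD (d : ℕ) (u : (Fin d → ℝ) → ℝ) : ℝ := l2normSqD d u + h1semiSqD d u

/-- `v = Q_α u` is the `L²(Ω)`-orthogonal projection of `u` onto `S_α`. -/
def IsL2ProjSub (d m p : ℕ) (α : Fin d → Bool) (u v : (Fin d → ℝ) → ℝ) : Prop :=
  v ∈ TensorSplineSub d m p α ∧ ∀ w ∈ TensorSplineSub d m p α, ipd d (u - v) w = 0

/-- The coarse tensor-product spline space `(S_c)^d` (with `m/2` knot spans of
width `2h` per direction). -/
def TensorSplineCoarse (d m p : ℕ) : Submodule ℝ ((Fin d → ℝ) → ℝ) :=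
  TensorSpline d (m / 2) p

/-- `v = T_c u` is the `a(·,·)`-orthogonal (Galerkin) projection of `u` onto `(S_c)^d`. -/
def IsGalerkinCoarseProj (d m p : ℕ) (u v : (Fin d → ℝ) → ℝ) : Prop :=
  v ∈ TensorSplineCoarse d m p ∧ ∀ w ∈ TensorSplineCoarse d m p, aForm d (u - v) w = 0

end SplineMG

namespace SplineMG

theorem poly_contDiff (q : Polynomial ℝ) (n : WithTop ℕ∞) : ContDiff ℝ n (fun x => q.eval x) := by
  simp only [Polynomial.eval_eq_sum_range]
  fun_prop

theorem iter_add (q r : Polynomial ℝ) (k : ℕ) : Polynomial.derivative^[k] (q + r) =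
    Polynomial.derivative^[k] q + Polynomial.derivative^[k] r :=
  iterate_map_add Polynomial.derivative k q r

open Polynomial in
theorem iterDeriv_poly (q : ℝ[X]) (k : ℕ) :
    iteratedDeriv k (fun x => q.eval x) = fun x => (derivative^[k] q).eval x := by
  induction k with
  | zero => simp
  | succ k ih =>
    rw [iteratedDeriv_succ, ih, Function.iterate_succ_apply']
    funext x
    exact Polynomial.deriv _

theorem hasDerivAt_tp (n : ℕ) (x : ℝ) :
    HasDerivAt (fun y : ℝ => (max y 0) ^ (n + 2)) ((n + 2 : ℕ) * (max x 0) ^ (n + 1)) x := by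
  rcases lt_trichotomy x 0 with h | h | h
  · rw [max_eq_right h.le]
    have : HasDerivAt (fun _ : ℝ => (0 : ℝ)) 0 x := hasDerivAt_const _ _
    simp only [zero_pow (Nat.succ_ne_zero n), mul_zero]
    refine this.congr_of_eventuallyEq ?_
    filter_upwards [Iio_mem_nhds h] with y hy
    simp [max_eq_right (le_of_lt (show y < 0 from hy))]
  · subst h
    simp only [max_self, zero_pow (Nat.succ_ne_zero n), mul_zero]
    rw [hasDerivAt_iff_isLittleO]
    simp only [max_self, sub_zero, smul_zero]
    have h1 : (fun y : ℝ => (max y 0) ^ (n + 2) - 0 ^ (n + 2)) =O[nhds 0] (fun y : ℝ => y ^ (n + 2)) := by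
      refine Asymptotics.IsBigO.of_bound 1 (Filter.Eventually.of_forall fun y => ?_)
      simp only [ne_eq, Nat.add_eq_zero_iff, OfNat.ofNat_ne_zero, and_false, not_false_eq_true, zero_pow, sub_zero, norm_pow, one_mul]
      gcongr
      rw [Real.norm_eq_abs, Real.norm_eq_abs]
      rcases le_total y 0 with h | h
      · simp [max_eq_right h]
      · simp [max_eq_left h]
    refine h1.trans_isLittleO ?_
    have := Asymptotics.isLittleO_pow_pow (𝕜 := ℝ) (m := 1) (n := n + 2) (by omega)
    simpa using this
  · rw [max_eq_left h.le]
    have : HasDerivAt (fun y : ℝ => y ^ (n + 2)) ((n + 2 : ℕ) * x ^ (n + 1)) x := hasDerivAt_pow _ _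
    refine this.congr_of_eventuallyEq ?_
    filter_upwards [Ioi_mem_nhds h] with y hy
    simp [max_eq_left (le_of_lt (show 0 < y from hy))]

theorem contDiff_tp (n : ℕ) : ContDiff ℝ (n : ℕ) (fun y : ℝ => (max y 0) ^ (n + 1)) := by
  induction n with
  | zero =>
    simp only [Nat.cast_zero, contDiff_zero]
    fun_prop
  | succ n ih =>
    push_cast
    rw [contDiff_succ_iff_deriv]
    refine ⟨fun x => (hasDerivAt_tp n x).differentiableAt, by simp, ?_⟩
    have : deriv (fun y : ℝ => (max y 0) ^ (n + 1 + 1)) = fun x => ((n + 2 : ℕ) : ℝ) * (max x 0) ^ (n + 1) :=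
      funext fun x => (hasDerivAt_tp n x).deriv
    rw [this]
    exact contDiff_const.mul ih

/-- matching at a knot -/
theorem knot_match (p : ℕ) (hp : 1 ≤ p) (u : ℝ → ℝ) (t a b : ℝ) (hat : a < t) (htb : t < b)
    (hu : ContDiffAt ℝ (p - 1 : ℕ) u t) (q r : Polynomial ℝ)
    (hq : ∀ x ∈ Icc a t, u x = q.eval x) (hr : ∀ x ∈ Icc t b, u x = r.eval x)
    (hqd : q.natDegree ≤ p) (hrd : r.natDegree ≤ p) :
    ∃ c : ℝ, r = q + Polynomial.C c * (Polynomial.X - Polynomial.C t) ^ p := by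
  have key : ∀ k ≤ p - 1, ∀ (s : Polynomial ℝ) (a b : ℝ), a < b → t ∈ Icc a b →
      (∀ x ∈ Icc a b, u x = s.eval x) →
      iteratedDeriv k u t = (Polynomial.derivative^[k] s).eval t := by
    intro k hk s a b hab ht hs
    have hU := uniqueDiffOn_Icc hab
    have h1 := iteratedDerivWithin_eq_iteratedDeriv (n := k) hU
      (hu.of_le (by exact_mod_cast hk)) ht
    have h2 := iteratedDerivWithin_eq_iteratedDeriv (n := k) (f := fun x => s.eval x) hU
      ((poly_contDiff s _).contDiffAt) ht
    have h3 := iteratedDerivWithin_congr (n := k) (f := u) (g := fun x => s.eval x) hs ht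
    rw [← h1, h3, h2, iterDeriv_poly]
  have hd : ∀ k < p, (Polynomial.derivative^[k] (r - q)).eval t = 0 := by
    intro k hk
    rw [Polynomial.iterate_derivative_sub, Polynomial.eval_sub,
      ← key k (by omega) q a t hat ⟨hat.le, le_rfl⟩ hq,
      ← key k (by omega) r t b htb ⟨le_rfl, htb.le⟩ hr, sub_self]
  have hdvd : (Polynomial.X - Polynomial.C t) ^ p ∣ r - q := by
    by_cases h0 : r - q = 0
    · rw [h0]; exact dvd_zero _
    rw [← Polynomial.le_rootMultiplicity_iff h0]
    have := (Polynomial.lt_rootMultiplicity_iff_isRoot_iterate_derivative (n := p - 1) (t := t) h0).2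
      (fun k hk => hd k (by omega))
    omega
  obtain ⟨s, hs⟩ := hdvd
  have hsd : s.natDegree = 0 := by
    by_cases h0 : s = 0
    · simp [h0]
    have h1 : (r - q).natDegree ≤ p := (Polynomial.natDegree_sub_le _ _).trans (max_le hrd hqd)
    rw [hs, Polynomial.Monic.natDegree_mul' ((Polynomial.monic_X_sub_C t).pow p) h0,
      (Polynomial.monic_X_sub_C t).natDegree_pow, Polynomial.natDegree_X_sub_C] at h1
    omega
  refine ⟨s.coeff 0, ?_⟩
  rw [← Polynomial.eq_C_of_natDegree_eq_zero hsd, mul_comm, ← hs]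
  ring

abbrev E (n p : ℕ) := (Polynomial.degreeLT ℝ (p + 1)) × (Fin n → ℝ)

def knot (n : ℕ) (j : ℕ) : ℝ := ((j : ℝ) + 1) / ((n + 1 : ℕ) : ℝ)

def Tmap (n p : ℕ) : E n p →ₗ[ℝ] (ℝ → ℝ) where
  toFun e := fun x => (e.1 : Polynomial ℝ).eval x +
    ∑ j : Fin n, e.2 j * (max (x - knot n j) 0) ^ p
  map_add' e f := by
    funext x
    simp [add_mul, Finset.sum_add_distrib]
    ring
  map_smul' a e := by
    funext x
    simp [Finset.mul_sum, mul_add, mul_assoc]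

def Qmap (n p k : ℕ) : E n p →ₗ[ℝ] Polynomial ℝ where
  toFun e := (e.1 : Polynomial ℝ) +
    ∑ j : Fin n, if (j : ℕ) < k then
      e.2 j • (Polynomial.X - Polynomial.C (knot n j)) ^ p else 0
  map_add' e f := by
    have : ∀ j : Fin n, (if (j : ℕ) < k then
      (e + f).2 j • (Polynomial.X - Polynomial.C (knot n j)) ^ p else 0) =
      (if (j : ℕ) < k then
      e.2 j • (Polynomial.X - Polynomial.C (knot n j)) ^ p else 0) + (if (j : ℕ) < k then
      f.2 j • (Polynomial.X - Polynomial.C (knot n j)) ^ p else 0) := by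
      intro j
      split_ifs <;> simp [add_smul]
    simp only [this, Finset.sum_add_distrib]
    simp only [Prod.fst_add, Submodule.coe_add]
    abel
  map_smul' a e := by
    simp [Finset.smul_sum, mul_smul]

theorem Qmap_zero (n p : ℕ) (e : E n p) : Qmap n p 0 e = e.1 := by
  simp [Qmap]

theorem Qmap_succ (n p : ℕ) (e : E n p) (k : ℕ) (hk : k < n) : Qmap n p (k + 1) e =
    Qmap n p k e + e.2 ⟨k, hk⟩ • (Polynomial.X - Polynomial.C (knot n k)) ^ p := by
  simp only [Qmap, LinearMap.coe_mk, AddHom.coe_mk, add_assoc]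
  congr 1
  rw [← sub_eq_iff_eq_add', ← Finset.sum_sub_distrib, Finset.sum_eq_single ⟨k, hk⟩]
  · simp
  · intro j _ hj
    have : (j : ℕ) ≠ k := fun h => hj (Fin.ext h)
    by_cases h : (j : ℕ) < k
    · simp [h, show (j : ℕ) < k + 1 by omega]
    · simp [h, show ¬ (j : ℕ) < k + 1 by omega]
  · simp

theorem Qmap_degree (n p k : ℕ) (e : E n p) : (Qmap n p k e).natDegree ≤ p := by
  simp only [Qmap, LinearMap.coe_mk, AddHom.coe_mk]
  refine (Polynomial.natDegree_add_le _ _).trans (max_le ?_ ?_)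
  · have := e.1.2
    rw [Polynomial.mem_degreeLT] at this
    by_cases h0 : (e.1 : Polynomial ℝ) = 0
    · simp [h0]
    have := (Polynomial.natDegree_lt_iff_degree_lt h0).2 this
    omega
  · refine Polynomial.natDegree_sum_le_of_forall_le _ _ fun j _ => ?_
    split_ifs
    · refine (Polynomial.natDegree_smul_le _ _).trans ?_
      rw [(Polynomial.monic_X_sub_C _).natDegree_pow, Polynomial.natDegree_X_sub_C]
      omega
    · simp

theorem mem_piece {n k : ℕ} (hk : k ≤ n) (x : ℝ) (hx : x ∈ pieceSet (n + 1) k) (j : ℕ) (hj : j < n) :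
    (j < k → knot n j ≤ x) ∧ (k ≤ j → x ≤ knot n j) := by
  have hn : (0 : ℝ) < ((n + 1 : ℕ) : ℝ) := by positivity
  unfold pieceSet at hx
  unfold knot
  rw [div_le_iff₀ hn, le_div_iff₀ hn]
  constructor
  · intro h
    have h' : (j : ℝ) + 1 ≤ k := by exact_mod_cast h
    have h0 : k ≠ 0 := by omega
    rw [if_neg h0] at hx
    rcases hx with hx | hx
    · have := hx.1
      rw [div_le_iff₀ hn] at this
      linarith
    · split_ifs at hx with h2
      · rw [mem_Ici, div_le_iff₀ hn] at hx
        have : (k : ℝ) = n := by exact_mod_cast h2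
        push_cast at *
        linarith
      · exact absurd hx (by simp)
  · intro h
    have h' : (k : ℝ) ≤ j := by exact_mod_cast h
    rcases hx with hx | hx
    · split_ifs at hx with h2
      · rw [mem_Iic, le_div_iff₀ hn] at hx
        have : (0 : ℝ) ≤ j := by positivity
        linarith
      · have := hx.2
        rw [le_div_iff₀ hn] at this
        linarith
    · rw [if_neg (by omega)] at hx
      exact absurd hx (by simp)

theorem Tmap_piece {n p k : ℕ} (hp : 1 ≤ p) (hk : k ≤ n) (e : E n p) (x : ℝ)
    (hx : x ∈ pieceSet (n + 1) k) : Tmap n p e x = (Qmap n p k e).eval x := by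
  simp only [Tmap, Qmap, LinearMap.coe_mk, AddHom.coe_mk, Polynomial.eval_add,
    Polynomial.eval_finsetSum]
  congr 1
  refine Finset.sum_congr rfl fun j _ => ?_
  have := mem_piece hk x hx j j.2
  split_ifs with h
  · rw [max_eq_left (by linarith [this.1 h])]
    simp
  · rw [max_eq_right (by linarith [this.2 (by omega)])]
    simp [show p ≠ 0 by omega]

theorem exists_piece (n : ℕ) (x : ℝ) : ∃ k ≤ n, x ∈ pieceSet (n + 1) k := by
  have hn : (0 : ℝ) < ((n + 1 : ℕ) : ℝ) := by positivity
  by_cases h1 : x ≤ 1 / ((n + 1 : ℕ) : ℝ)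
  · exact ⟨0, by omega, Or.inl (by simpa using h1)⟩
  by_cases h2 : (((n + 1 : ℕ) : ℝ) - 1) / ((n + 1 : ℕ) : ℝ) ≤ x
  · refine ⟨n, le_rfl, Or.inr ?_⟩
    rw [if_pos (by omega)]
    exact h2
  rw [not_le] at h1 h2
  rw [div_lt_iff₀ hn] at h1
  rw [lt_div_iff₀ hn] at h2
  have h3 := Nat.floor_le (show 0 ≤ x * ((n + 1 : ℕ) : ℝ) by linarith)
  have h4 := Nat.lt_floor_add_one (x * ((n + 1 : ℕ) : ℝ))
  refine ⟨⌊x * ((n + 1 : ℕ) : ℝ)⌋₊, ?_, Or.inl ?_⟩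
  · have : (⌊x * ((n + 1 : ℕ) : ℝ)⌋₊ : ℝ) < ((n + 1 : ℕ) : ℝ) := by linarith
    have : ⌊x * ((n + 1 : ℕ) : ℝ)⌋₊ < n + 1 := by exact_mod_cast this
    omega
  · have : ⌊x * ((n + 1 : ℕ) : ℝ)⌋₊ ≠ 0 := by
      have := (Nat.floor_pos (a := x * ((n + 1 : ℕ) : ℝ))).2 h1.le
      omega
    rw [if_neg this]
    constructor
    · rwa [div_le_iff₀ hn]
    · rw [le_div_iff₀ hn]; exact h4.le

theorem Tmap_isSpline {n p : ℕ} (hp : 1 ≤ p) (e : E n p) : IsSpline (n + 1) p (Tmap n p e) := by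
  refine ⟨ContDiff.contDiffOn ?_, fun j hj => ⟨Qmap n p j e, Qmap_degree _ _ _ _, fun x hx =>
    Tmap_piece hp (by omega) e x hx⟩⟩
  have h : ContDiff ℝ (p - 1 : ℕ) (fun y : ℝ => (max y 0) ^ p) := by
    have := contDiff_tp (p - 1)
    rwa [Nat.sub_add_cancel hp] at this
  simp only [Tmap, LinearMap.coe_mk, AddHom.coe_mk]
  refine (poly_contDiff _ _).add (ContDiff.sum fun j _ => contDiff_const.mul ?_)
  exact h.comp (contDiff_id.sub contDiff_const)

theorem left_mem (n k : ℕ) (x : ℝ) (h1 : (k : ℝ) / ((n + 1 : ℕ) : ℝ) ≤ x) (h2 : x ≤ knot n k) :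
    x ∈ pieceSet (n + 1) k := by
  refine Or.inl ?_
  split_ifs with h
  · subst h
    simpa [knot] using h2
  · exact ⟨h1, h2⟩

theorem isSpline_exists {n p : ℕ} (hp : 1 ≤ p) (u : ℝ → ℝ) (hu : IsSpline (n + 1) p u) :
    ∃ e, Tmap n p e = u := by
  have hn : (0 : ℝ) < ((n + 1 : ℕ) : ℝ) := by positivity
  obtain ⟨hc, hq⟩ := hu
  choose! q hqd hqe using hq
  have hk : ∀ k < n, ∃ c : ℝ, q (k + 1) = q k +
      Polynomial.C c * (Polynomial.X - Polynomial.C (knot n k)) ^ p := by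
    intro k hk
    refine knot_match p hp u (knot n k) (k / ((n + 1 : ℕ) : ℝ)) (knot n (k + 1)) ?_ ?_ ?_ _ _ ?_ ?_
      (hqd k (by omega)) (hqd (k + 1) (by omega))
    · unfold knot; gcongr; linarith
    · unfold knot; gcongr; push_cast; linarith
    · refine hc.contDiffAt (Ioo_mem_nhds ?_ ?_)
      · unfold knot; positivity
      · unfold knot; rw [div_lt_one hn]; exact_mod_cast (by omega)
    · intro x hx
      exact hqe k (by omega) x (left_mem n k x hx.1 hx.2)
    · intro x hx
      refine hqe (k + 1) (by omega) x (left_mem n (k + 1) x ?_ hx.2)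
      have := hx.1
      unfold knot at this
      push_cast at *
      exact this
  choose! c hcq using hk
  have h0 : q 0 ∈ Polynomial.degreeLT ℝ (p + 1) := by
    rw [Polynomial.mem_degreeLT]
    refine lt_of_le_of_lt Polynomial.degree_le_natDegree ?_
    have := hqd 0 (by omega)
    exact_mod_cast (by omega)
  refine ⟨(⟨q 0, h0⟩, fun j => c j), ?_⟩
  have hQ : ∀ k ≤ n, Qmap n p k (⟨q 0, h0⟩, fun j => c j) = q k := by
    intro k
    induction k with
    | zero => intro _; rw [Qmap_zero]
    | succ k ih =>
      intro h
      rw [Qmap_succ _ _ _ _ (by omega), ih (by omega), hcq k (by omega), Polynomial.smul_eq_C_mul]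
  funext x
  obtain ⟨k, hk, hx⟩ := exists_piece n x
  rw [Tmap_piece hp hk _ x hx, hQ k hk, hqe k (by omega) x hx]

theorem Tmap_inj {n p : ℕ} (hp : 1 ≤ p) : Function.Injective (Tmap n p) := by
  have hn : (0 : ℝ) < ((n + 1 : ℕ) : ℝ) := by positivity
  rw [← LinearMap.ker_eq_bot, LinearMap.ker_eq_bot']
  intro e he
  have hQ : ∀ k ≤ n, Qmap n p k e = 0 := by
    intro k hk
    refine Polynomial.eq_of_infinite_eval_eq _ _ ?_
    have : (k : ℝ) / ((n + 1 : ℕ) : ℝ) < knot n k := by unfold knot; gcongr; linarith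
    refine (Icc_infinite this).mono fun x hx => ?_
    rw [mem_ofPred_eq, ← Tmap_piece hp hk e x (left_mem n k x hx.1 hx.2), he]
    simp
  refine Prod.ext (Subtype.ext ?_) (funext fun j => ?_)
  · rw [← Qmap_zero n p e, hQ 0 (by omega)]; rfl
  · have := Qmap_succ n p e j j.2
    rw [hQ _ (by omega), hQ _ (by omega), zero_add] at this
    have := (smul_eq_zero.1 this.symm).resolve_right
      (((Polynomial.monic_X_sub_C _).pow p).ne_zero)
    simpa using this

theorem span_S {n p : ℕ} (hp : 1 ≤ p) :
    Submodule.span ℝ {u : ℝ → ℝ | IsSpline (n + 1) p u} = LinearMap.range (Tmap n p) := by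
  have : {u : ℝ → ℝ | IsSpline (n + 1) p u} = (LinearMap.range (Tmap n p) : Set (ℝ → ℝ)) := by
    ext u
    constructor
    · intro h; exact isSpline_exists hp u h
    · rintro ⟨e, rfl⟩; exact Tmap_isSpline hp e
  rw [this, Submodule.span_eq]

def Fmap (n p : ℕ) : E n p →ₗ[ℝ] (Fin (p / 2) → ℝ) × (Fin (p / 2) → ℝ) where
  toFun e := (fun l => (Polynomial.derivative^[2 * (l : ℕ) + 1] (Qmap n p 0 e)).eval 0,
    fun l => (Polynomial.derivative^[2 * (l : ℕ) + 1] (Qmap n p n e)).eval 1)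
  map_add' e f := by
    ext l <;> simp [iter_add]
  map_smul' a e := by
    ext l <;> simp [Polynomial.iterate_derivative_smul]

theorem iter_zero {n p : ℕ} (hp : 1 ≤ p) (e : E n p) (k : ℕ) :
    iteratedDeriv k (Tmap n p e) 0 = (Polynomial.derivative^[k] (Qmap n p 0 e)).eval 0 := by
  have hn : (0 : ℝ) < ((n + 1 : ℕ) : ℝ) := by positivity
  have : Tmap n p e =ᶠ[nhds 0] fun x => (Qmap n p 0 e).eval x := by
    filter_upwards [Iic_mem_nhds (show (0 : ℝ) < 1 / ((n + 1 : ℕ) : ℝ) by positivity)] with x hx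
    exact Tmap_piece hp (by omega) e x (Or.inl (by rw [if_pos rfl]; exact hx))
  rw [this.iteratedDeriv_eq, iterDeriv_poly]

theorem iter_one {n p : ℕ} (hp : 1 ≤ p) (e : E n p) (k : ℕ) :
    iteratedDeriv k (Tmap n p e) 1 = (Polynomial.derivative^[k] (Qmap n p n e)).eval 1 := by
  have hn : (0 : ℝ) < ((n + 1 : ℕ) : ℝ) := by positivity
  have : Tmap n p e =ᶠ[nhds 1] fun x => (Qmap n p n e).eval x := by
    have h : (((n + 1 : ℕ) : ℝ) - 1) / ((n + 1 : ℕ) : ℝ) < 1 := by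
      rw [div_lt_one hn]; linarith
    filter_upwards [Ici_mem_nhds h] with x hx
    exact Tmap_piece hp le_rfl e x (Or.inr (by rw [if_pos (by omega)]; exact hx))
  rw [this.iteratedDeriv_eq, iterDeriv_poly]

theorem span_S0 {n p : ℕ} (hp : 1 ≤ p) :
    Submodule.span ℝ {u : ℝ → ℝ | IsSpline0 (n + 1) p u} =
      (LinearMap.ker (Fmap n p)).map (Tmap n p) := by
  have : {u : ℝ → ℝ | IsSpline0 (n + 1) p u} =
      ((LinearMap.ker (Fmap n p)).map (Tmap n p) : Set (ℝ → ℝ)) := by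
    ext u
    constructor
    · rintro ⟨h, h2⟩
      obtain ⟨e, rfl⟩ := isSpline_exists hp u h
      refine ⟨e, ?_, rfl⟩
      refine LinearMap.mem_ker.2 (Prod.ext (funext fun l => ?_) (funext fun l => ?_))
      · have := (h2 l (by omega)).1
        rwa [iter_zero hp] at this
      · have := (h2 l (by omega)).2
        rwa [iter_one hp] at this
    · rintro ⟨e, he, rfl⟩
      refine ⟨Tmap_isSpline hp e, fun l hl => ?_⟩
      rw [iter_zero hp, iter_one hp]
      have he := LinearMap.mem_ker.1 he
      exact ⟨congrFun (congrArg Prod.fst he) ⟨l, by omega⟩,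
        congrFun (congrArg Prod.snd he) ⟨l, by omega⟩⟩
  rw [this, Submodule.span_eq]

instance (n : ℕ) : FiniteDimensional ℝ (Polynomial.degreeLT ℝ n) :=
  LinearEquiv.finiteDimensional (Polynomial.degreeLTEquiv ℝ n).symm

theorem finrank_E (n p : ℕ) : Module.finrank ℝ (E n p) = p + 1 + n := by
  rw [Module.finrank_prod, (Polynomial.degreeLTEquiv ℝ (p + 1)).finrank_eq]
  simp

theorem moment (n : ℕ) (b : ℕ → ℝ) : ∃ c : Fin n → ℝ, ∀ k, 1 ≤ k → k ≤ n →
    ∑ j : Fin n, c j * (1 - knot n j) ^ k = b k := by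
  have hn : (0 : ℝ) < ((n + 1 : ℕ) : ℝ) := by positivity
  let v : Fin (n + 1) → ℝ := fun j => 1 - knot n j
  have hv : Function.Injective v := by
    intro i j h
    simp only [v, knot, sub_right_inj] at h
    rw [div_left_inj' hn.ne'] at h
    exact Fin.ext (by exact_mod_cast (add_right_cancel h))
  have hdet : IsUnit (Matrix.vandermonde v).det := (Matrix.det_vandermonde_ne_zero_iff.2 hv).isUnit
  let w : Fin (n + 1) → ℝ := Matrix.vecMul (fun k : Fin (n + 1) => b k) (Matrix.vandermonde v)⁻¹
  have hw : Matrix.vecMul w (Matrix.vandermonde v) = fun k : Fin (n + 1) => b k := by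
    simp only [w, Matrix.vecMul_vecMul, Matrix.nonsing_inv_mul _ hdet, Matrix.vecMul_one]
  refine ⟨fun j => w j.castSucc, fun k h1 h2 => ?_⟩
  have := congrFun hw ⟨k, by omega⟩
  simp only [Matrix.vecMul, dotProduct, Matrix.vandermonde_apply] at this
  rw [Fin.sum_univ_castSucc] at this
  have hl : v (Fin.last n) = 0 := by
    simp only [v, knot, Fin.val_last]
    push_cast at hn ⊢
    rw [div_self hn.ne', sub_self]
  rw [hl, zero_pow (by omega), mul_zero, add_zero] at this
  simpa [v] using this

theorem Fmap_surj {n p : ℕ} (hnp : p ≤ n) : Function.Surjective (Fmap n p) := by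
  rintro ⟨α, β⟩
  let P : Polynomial ℝ := ∑ l : Fin (p / 2),
    Polynomial.monomial (2 * (l : ℕ) + 1) (α l / ((2 * (l : ℕ) + 1).factorial : ℝ))
  have hP : P ∈ Polynomial.degreeLT ℝ (p + 1) := by
    refine Submodule.sum_mem _ fun l _ => ?_
    rw [Polynomial.mem_degreeLT]
    refine lt_of_le_of_lt (Polynomial.degree_monomial_le _ _) ?_
    exact_mod_cast (by omega)
  have hP0 : ∀ l : Fin (p / 2), (Polynomial.derivative^[2 * (l : ℕ) + 1] P).eval 0 = α l := by
    intro l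
    rw [← Polynomial.coeff_zero_eq_eval_zero, Polynomial.coeff_iterate_derivative]
    simp only [P, Polynomial.finsetSum_coeff, Polynomial.coeff_monomial, zero_add]
    rw [Finset.sum_eq_single l]
    · have : ((2 * (l : ℕ) + 1).factorial : ℝ) ≠ 0 := by positivity
      rw [if_pos rfl, Nat.descFactorial_self, nsmul_eq_mul]
      field_simp
    · intro j _ hj
      rw [if_neg]
      intro h
      exact hj (Fin.ext (by omega))
    · simp
  obtain ⟨c, hc⟩ := moment n (fun k => if h : (p - k) / 2 < p / 2 then
    (β ⟨(p - k) / 2, h⟩ - (Polynomial.derivative^[p - k] P).eval 1) / (p.descFactorial (p - k) : ℝ)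
      else 0)
  refine ⟨(⟨P, hP⟩, c), Prod.ext (funext fun l => ?_) (funext fun l => ?_)⟩
  · simp only [Fmap, LinearMap.coe_mk, AddHom.coe_mk, Qmap_zero]
    exact hP0 l
  · simp only [Fmap, LinearMap.coe_mk, AddHom.coe_mk, Qmap, Fin.is_lt, if_true,
      iter_add, Polynomial.iterate_derivative_sum,
      Polynomial.iterate_derivative_smul, Polynomial.iterate_derivative_X_sub_pow,
      Polynomial.eval_add, Polynomial.eval_finsetSum]
    have hl : 2 * (l : ℕ) + 1 < p := by omega
    have h := hc (p - (2 * (l : ℕ) + 1)) (by omega) (by omega)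
    have e1 : p - (p - (2 * (l : ℕ) + 1)) = 2 * (l : ℕ) + 1 := by omega
    have e2 : (2 * (l : ℕ) + 1) / 2 = l := by omega
    simp only [e1, e2, Fin.is_lt, dif_pos, Fin.eta] at h
    have hd : (p.descFactorial (2 * (l : ℕ) + 1) : ℝ) ≠ 0 := by
      have : p.descFactorial (2 * (l : ℕ) + 1) ≠ 0 := by
        rw [Ne, Nat.descFactorial_eq_zero_iff_lt]; omega
      exact_mod_cast this
    rw [eq_div_iff hd, Finset.sum_mul] at h
    rw [← eq_sub_iff_add_eq', ← h]
    refine Finset.sum_congr rfl fun j _ => ?_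
    simp
    ring

/-- `dim S = m + p`, `dim S₀ ≥ dim S − p`, and if `p + 1 ≤ m`
then `dim S₀ = m + p − 2⌊p/2⌋` exactly. -/
theorem spline_space_dimensions :
    ∀ m p : ℕ, 1 ≤ m → 1 ≤ p →
      Module.finrank ℝ (Submodule.span ℝ {u : ℝ → ℝ | IsSpline m p u}) = m + p ∧
      Module.finrank ℝ (Submodule.span ℝ {u : ℝ → ℝ | IsSpline m p u}) - p ≤
        Module.finrank ℝ (Submodule.span ℝ {u : ℝ → ℝ | IsSpline0 m p u}) ∧
      (p + 1 ≤ m →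
        Module.finrank ℝ (Submodule.span ℝ {u : ℝ → ℝ | IsSpline0 m p u}) =
          m + p - 2 * (p / 2)) := by
  intro m p hm hp
  obtain ⟨n, rfl⟩ : ∃ n, m = n + 1 := ⟨m - 1, by omega⟩
  have hT := Tmap_inj (n := n) hp
  have h1 : Module.finrank ℝ (Submodule.span ℝ {u : ℝ → ℝ | IsSpline (n + 1) p u}) = n + 1 + p := by
    rw [span_S hp, LinearMap.finrank_range_of_inj hT, finrank_E]; omega
  have h2 : Module.finrank ℝ (Submodule.span ℝ {u : ℝ → ℝ | IsSpline0 (n + 1) p u}) =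
      Module.finrank ℝ (LinearMap.ker (Fmap n p)) := by
    rw [span_S0 hp]
    exact (Submodule.equivMapOfInjective (Tmap n p) hT (LinearMap.ker (Fmap n p))).finrank_eq.symm
  have h3 := LinearMap.finrank_range_add_finrank_ker (Fmap n p)
  have h5 : Module.finrank ℝ ((Fin (p / 2) → ℝ) × (Fin (p / 2) → ℝ)) = p / 2 + p / 2 := by simp
  rw [finrank_E] at h3
  refine ⟨h1, ?_, fun hmp => ?_⟩
  · have h4 := Submodule.finrank_le (LinearMap.range (Fmap n p))
    rw [h1, h2]
    omega
  · have h4 := LinearMap.range_eq_top.2 (Fmap_surj (n := n) (p := p) (by omega))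
    rw [h4, finrank_top] at h3
    rw [h2]
    omega

end SplineMG
end
end

section
/- There exists a constant c > 0 independent of the mesh size h and the spline degree p such that the L2-orthogonal projector Q_0 onto S_0 is H^1-stable on the spline space: |Q_0 u|_1 ≤ c |u|_1 for all u ∈ S. -/
noncomputable section

open MeasureTheory Set

namespace SplineMG

section Abstract
variable {H : Type*} [NormedAddCommGroup H] [InnerProductSpace ℝ H]

/-- The pair (Neumann-type space, Dirichlet-type space) of each degree. -/
def VV (J : H →ₗ[ℝ] H) (o : H) (V : Submodule ℝ H) : ℕ → Submodule ℝ H × Submodule ℝ H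
  | 0 => (V, V)
  | q + 1 => (Submodule.span ℝ {o} ⊔ (VV J o V q).2.map J,
      ((VV J o V q).1 ⊓ LinearMap.ker (innerₗ H o)).map J)

lemma VV_fd (J : H →ₗ[ℝ] H) (o : H) (V : Submodule ℝ H) [FiniteDimensional ℝ V] (q : ℕ) :
    FiniteDimensional ℝ (VV J o V q).1 ∧ FiniteDimensional ℝ (VV J o V q).2 := by
  induction q with
  | zero => exact ⟨‹_›, ‹_›⟩
  | succ q ih =>
    obtain ⟨h1, h2⟩ := ih
    refine ⟨?_, ?_⟩
    · show FiniteDimensional ℝ ((Submodule.span ℝ {o} ⊔ (VV J o V q).2.map J : Submodule ℝ H))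
      infer_instance
    · show FiniteDimensional ℝ
        ((((VV J o V q).1 ⊓ LinearMap.ker (innerₗ H o)).map J : Submodule ℝ H))
      infer_instance

lemma mem_VV1 {J : H →ₗ[ℝ] H} {o : H} {V : Submodule ℝ H} {q : ℕ} {x : H} :
    x ∈ (VV J o V (q+1)).1 ↔ ∃ c : ℝ, ∃ g ∈ (VV J o V q).2, x = c • o + J g := by
  simp only [VV, Submodule.mem_sup, Submodule.mem_span_singleton, Submodule.mem_map]
  constructor
  · rintro ⟨_, ⟨c, rfl⟩, _, ⟨g, hg, rfl⟩, rfl⟩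
    exact ⟨c, g, hg, rfl⟩
  · rintro ⟨c, g, hg, rfl⟩
    exact ⟨_, ⟨c, rfl⟩, _, ⟨g, hg, rfl⟩, rfl⟩

lemma mem_VV2 {J : H →ₗ[ℝ] H} {o : H} {V : Submodule ℝ H} {q : ℕ} {x : H} :
    x ∈ (VV J o V (q+1)).2 ↔ ∃ g ∈ (VV J o V q).1, inner ℝ o g = 0 ∧ x = J g := by
  simp only [VV, Submodule.mem_map, Submodule.mem_inf, LinearMap.mem_ker, innerₗ_apply_apply]
  constructor
  · rintro ⟨g, ⟨hg, h0⟩, rfl⟩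
    exact ⟨g, hg, h0, rfl⟩
  · rintro ⟨g, hg, h0, rfl⟩
    exact ⟨g, ⟨hg, h0⟩, rfl⟩

lemma one_mem_VV {J : H →ₗ[ℝ] H} {o : H} {V : Submodule ℝ H} (hoV : o ∈ V) (q : ℕ) :
    o ∈ (VV J o V q).1 := by
  cases q with
  | zero => exact hoV
  | succ q => exact mem_VV1.2 ⟨1, 0, zero_mem _, by simp⟩

lemma cs_aux {a b x : ℝ} (hx : 0 ≤ x) (h : x ^ 2 ≤ a * x) (hb : a ≤ b) (hb0 : 0 ≤ b) : x ≤ b := by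
  rcases hx.eq_or_lt with h0 | h0
  · linarith
  · have : x ≤ a := by nlinarith
    linarith

theorem abs_inv (J : H →ₗ[ℝ] H) (o : H) (V : Submodule ℝ H) (K : ℝ) (hK : 0 ≤ K)
    (hJ : ∀ f g : H, inner ℝ (J f) g + inner ℝ f (J g) = inner ℝ f o * inner ℝ o g)
    (hV : ∀ c : ℝ, ∀ g ∈ V, ‖g‖ ≤ K * ‖c • o + J g‖) (q : ℕ) :
    (∀ c : ℝ, ∀ g ∈ (VV J o V q).2, ‖g‖ ≤ K * ‖c • o + J g‖) ∧
    (∀ g ∈ (VV J o V q).1, inner ℝ o g = 0 → ‖g‖ ≤ K * ‖J g‖) := by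
  induction q with
  | zero => exact ⟨hV, fun g hg _ => by simpa using hV 0 g hg⟩
  | succ q ih =>
    obtain ⟨ih1, ih2⟩ := ih
    constructor
    · intro c g hg
      obtain ⟨k, hk, hk0, rfl⟩ := mem_VV2.1 hg
      have h1 := hJ (J k) k
      have h2 := ih2 k hk hk0
      have h3 : ‖J k‖ ^ 2 ≤ ‖c • o + J (J k)‖ * ‖k‖ := by
        have : ‖J k‖ ^ 2 = - inner ℝ (c • o + J (J k)) k := by
          rw [hk0] at h1
          rw [inner_add_left, inner_smul_left, hk0, ← real_inner_self_eq_norm_sq]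
          rw [mul_zero, zero_add]; linarith
        rw [this]
        have := neg_abs_le (inner ℝ (c • o + J (J k)) k)
        have := abs_real_inner_le_norm (c • o + J (J k)) k
        linarith
      refine cs_aux (norm_nonneg _) (a := K * ‖c • o + J (J k)‖) ?_ le_rfl (by positivity)
      calc _ ≤ _ := h3
        _ ≤ ‖c • o + J (J k)‖ * (K * ‖J k‖) := by gcongr
        _ = _ := by ring
    · intro g hg hg0
      obtain ⟨c, k, hk, rfl⟩ := mem_VV1.1 hg
      set g := c • o + J k with hgd
      have h2 := ih1 c k hk
      have h3 : ‖g‖ ^ 2 ≤ ‖J g‖ * ‖k‖ := by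
        have h1 := hJ g k
        have : ‖g‖ ^ 2 = - inner ℝ (J g) k := by
          rw [real_inner_comm] at hg0
          rw [hg0] at h1
          rw [← real_inner_self_eq_norm_sq]
          nth_rewrite 2 [hgd]
          rw [inner_add_right, inner_smul_right, hg0]
          linarith
        rw [this]
        have := neg_abs_le (inner ℝ (J g) k)
        have := abs_real_inner_le_norm (J g) k
        linarith
      refine cs_aux (norm_nonneg _) (a := K * ‖J g‖) ?_ le_rfl (by positivity)
      calc _ ≤ _ := h3
        _ ≤ ‖J g‖ * (K * ‖g‖) := by gcongr
        _ = _ := by ring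

lemma dual_step (J : H →ₗ[ℝ] H) (W : Submodule ℝ H) (h : ℝ) (hh : 0 ≤ h)
    (d e : H) (n : ℝ) (hn : ‖d‖ ≤ n) (hd : ∀ w ∈ W, inner ℝ d w = 0)
    (he : ‖e‖ ^ 2 = - inner ℝ d (J e)) (hW : ∃ v ∈ W, ‖J e - v‖ ≤ h * ‖e‖) :
    ‖e‖ ≤ h * n := by
  obtain ⟨v, hv, hv2⟩ := hW
  have h1 : ‖e‖ ^ 2 = - inner ℝ d (J e - v) := by
    rw [inner_sub_right, hd v hv, he]; ring
  have := neg_abs_le (inner ℝ d (J e - v))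
  have := abs_real_inner_le_norm d (J e - v)
  have h0 := (norm_nonneg d).trans hn
  refine cs_aux (norm_nonneg _) (a := h * n) ?_ le_rfl (by positivity)
  calc ‖e‖ ^ 2 ≤ ‖d‖ * ‖J e - v‖ := by linarith
    _ ≤ n * (h * ‖e‖) := by gcongr
    _ = _ := by ring

lemma exists_proj (W : Submodule ℝ H) [FiniteDimensional ℝ W] (g : H) :
    ∃ g' ∈ W, (∀ w ∈ W, inner ℝ (g - g') w = 0) ∧ ‖g'‖ ≤ ‖g‖ ∧ ‖g - g'‖ ≤ ‖g‖ := by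
  have hort : ∀ w ∈ W, inner ℝ (g - W.starProjection g) w = 0 :=
    fun w hw => W.starProjection_inner_eq_zero g w hw
  refine ⟨W.starProjection g, W.starProjection_apply_mem g, hort, ?_, ?_⟩
  · exact W.norm_starProjection_apply_le g
  · have h1 := hort _ (W.starProjection_apply_mem g)
    have h2 := norm_add_sq_real (g - W.starProjection g) (W.starProjection g)
    rw [h1, sub_add_cancel] at h2
    have := sq_nonneg ‖W.starProjection g‖
    exact abs_le_of_sq_le_sq' (by linarith) (norm_nonneg _) |>.2

theorem stepA (J : H →ₗ[ℝ] H) (o : H) (ho : ‖o‖ = 1) (h : ℝ) (hh : 0 ≤ h)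
    (hJ : ∀ f g : H, inner ℝ (J f) g + inner ℝ f (J g) = inner ℝ f o * inner ℝ o g)
    (W : Submodule ℝ H) [FiniteDimensional ℝ W]
    (hB : ∀ g : H, inner ℝ o g = 0 → ∃ v ∈ W, ‖J g - v‖ ≤ h * ‖g‖) (c : ℝ) (g : H) :
    ∃ c' : ℝ, ∃ g' ∈ W, ‖g'‖ ≤ ‖g‖ ∧ ‖(c • o + J g) - (c' • o + J g')‖ ≤ h * ‖g‖ := by
  obtain ⟨g', hg', hort, hn, hn2⟩ := exists_proj W g
  set d := g - g' with hd
  set a := inner ℝ o (J d) with ha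
  set e := J d - a • o with he
  have hoe : inner ℝ o e = 0 := by
    rw [he, inner_sub_right, inner_smul_right, real_inner_self_eq_norm_sq, ho, ← ha]; ring
  refine ⟨c + a, g', hg', hn, ?_⟩
  have hee : (c • o + J g) - ((c + a) • o + J g') = e := by
    rw [he, hd, map_sub, add_smul]; abel
  rw [hee]
  refine dual_step J W h hh d e ‖g‖ hn2 hort ?_ (hB e hoe)
  have h1 := hJ d e
  rw [hoe] at h1
  rw [← real_inner_self_eq_norm_sq]
  nth_rewrite 1 [he]
  rw [inner_sub_left, inner_smul_left, hoe]
  simp; linarith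

theorem stepB (J : H →ₗ[ℝ] H) (o : H) (h : ℝ) (hh : 0 ≤ h)
    (hJ : ∀ f g : H, inner ℝ (J f) g + inner ℝ f (J g) = inner ℝ f o * inner ℝ o g)
    (W : Submodule ℝ H) [FiniteDimensional ℝ W] (hoW : o ∈ W)
    (hA : ∀ g : H, ∃ v ∈ W, ‖J g - v‖ ≤ h * ‖g‖) (g : H) (hg : inner ℝ o g = 0) :
    ∃ g' ∈ W, inner ℝ o g' = 0 ∧ ‖J g - J g'‖ ≤ h * ‖g‖ := by
  obtain ⟨g', hg', hort, hn, hn2⟩ := exists_proj W g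
  have hdo := hort o hoW
  refine ⟨g', hg', ?_, ?_⟩
  · rw [inner_sub_left, real_inner_comm, hg] at hdo
    rw [real_inner_comm]; linarith
  · rw [← map_sub]
    refine dual_step J W h hh (g - g') (J (g - g')) ‖g‖ hn2 hort ?_ (hA _)
    have h1 := hJ (g - g') (J (g - g'))
    rw [hdo] at h1
    rw [← real_inner_self_eq_norm_sq]
    linarith

theorem abs_approx (J : H →ₗ[ℝ] H) (o : H) (ho : ‖o‖ = 1) (V : Submodule ℝ H)
    [FiniteDimensional ℝ V] (hoV : o ∈ V) (h : ℝ) (hh : 0 ≤ h)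
    (hJ : ∀ f g : H, inner ℝ (J f) g + inner ℝ f (J g) = inner ℝ f o * inner ℝ o g)
    (hV : ∀ g : H, ∃ v ∈ V, ‖J g - v‖ ≤ h * ‖g‖) (q : ℕ) :
    (∀ g : H, ∃ v ∈ (VV J o V q).1, ‖J g - v‖ ≤ h * ‖g‖) ∧
    (∀ g : H, inner ℝ o g = 0 → ∃ v ∈ (VV J o V q).2, ‖J g - v‖ ≤ h * ‖g‖) := by
  induction q with
  | zero => exact ⟨hV, fun g _ => hV g⟩
  | succ q ih =>
    obtain ⟨ih1, ih2⟩ := ih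
    obtain ⟨f1, f2⟩ := VV_fd J o V q
    constructor
    · intro g
      obtain ⟨c', g', hg', -, hn⟩ := stepA J o ho h hh hJ _ ih2 0 g
      exact ⟨_, mem_VV1.2 ⟨c', g', hg', rfl⟩, by simpa using hn⟩
    · intro g hg
      obtain ⟨g', hg', h0, hn⟩ := stepB J o h hh hJ _ (one_mem_VV hoV q) ih1 g hg
      exact ⟨_, mem_VV2.2 ⟨g', hg', h0, rfl⟩, hn⟩

theorem abs_main (J : H →ₗ[ℝ] H) (o : H) (ho : ‖o‖ = 1) (V : Submodule ℝ H)
    [FiniteDimensional ℝ V] (hoV : o ∈ V) (h K : ℝ) (hh : 0 ≤ h) (hK : 0 ≤ K)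
    (hJ : ∀ f g : H, inner ℝ (J f) g + inner ℝ f (J g) = inner ℝ f o * inner ℝ o g)
    (hV : ∀ g : H, ∃ v ∈ V, ‖J g - v‖ ≤ h * ‖g‖)
    (hV2 : ∀ c : ℝ, ∀ g ∈ V, ‖g‖ ≤ K * ‖c • o + J g‖) (q : ℕ)
    (c c₂ : ℝ) (g g₂ : H) (hg₂ : g₂ ∈ (VV J o V q).2)
    (hproj : ∀ w ∈ (VV J o V (q+1)).1, inner ℝ ((c • o + J g) - (c₂ • o + J g₂)) w = 0) :
    ‖g₂‖ ≤ (1 + K * h) * ‖g‖ := by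
  obtain ⟨f1, f2⟩ := VV_fd J o V q
  obtain ⟨c', g', hg', hn, hn2⟩ := stepA J o ho h hh hJ _
    (abs_approx J o ho V hoV h hh hJ hV q).2 c g
  set u := c • o + J g
  set v := c₂ • o + J g₂ with hv
  set w := c' • o + J g' with hw
  have hvw : ‖v - w‖ ≤ h * ‖g‖ := by
    have hm : v - w ∈ (VV J o V (q+1)).1 :=
      sub_mem (mem_VV1.2 ⟨_, _, hg₂, rfl⟩) (mem_VV1.2 ⟨_, _, hg', rfl⟩)
    have h1 := hproj _ hm
    have h2 := norm_add_sq_real (u - v) (v - w)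
    rw [h1, sub_add_sub_cancel] at h2
    have := sq_nonneg ‖u - v‖
    exact (abs_le_of_sq_le_sq' (by linarith) (norm_nonneg _) |>.2).trans hn2
  have h3 := (abs_inv J o V K hK hJ hV2 q).1 (c₂ - c') (g₂ - g') (sub_mem hg₂ hg')
  have h4 : (c₂ - c') • o + J (g₂ - g') = v - w := by
    rw [hv, hw, map_sub, sub_smul]; abel
  rw [h4] at h3
  have h5 : ‖g₂‖ ≤ ‖g₂ - g'‖ + ‖g'‖ := by simpa using norm_add_le (g₂ - g') g'
  have h6 : K * ‖v - w‖ ≤ K * (h * ‖g‖) := by gcongr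
  linarith
end Abstract

abbrev mu : Measure ℝ := volume.restrict (Ioo (0 : ℝ) 1)
abbrev EL : Type := Lp ℝ 2 mu

def prim (f : ℝ → ℝ) (x : ℝ) : ℝ := ∫ t in (0 : ℝ)..x, f t

lemma II_of_memLp {f : ℝ → ℝ} (hf : MemLp f 2 mu) : IntervalIntegrable f volume 0 1 := by
  rw [intervalIntegrable_iff_integrableOn_Ioo_of_le zero_le_one]
  exact hf.integrable (by norm_num)

lemma II_sub {f : ℝ → ℝ} (hf : IntervalIntegrable f volume 0 1) {a b : ℝ}
    (ha : a ∈ Icc (0 : ℝ) 1) (hb : b ∈ Icc (0 : ℝ) 1) : IntervalIntegrable f volume a b :=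
  hf.mono_set (by rw [uIcc_of_le zero_le_one]; exact ordConnected_Icc.uIcc_subset ha hb)

lemma prim_sub {f : ℝ → ℝ} (hf : IntervalIntegrable f volume 0 1) {a b : ℝ}
    (ha : a ∈ Icc (0 : ℝ) 1) (hb : b ∈ Icc (0 : ℝ) 1) :
    prim f b = prim f a + ∫ t in a..b, f t := by
  unfold prim
  rw [intervalIntegral.integral_add_adjacent_intervals] 
  · exact II_sub hf (by simp) ha
  · exact II_sub hf ha hb

lemma prim_ac {f : ℝ → ℝ} (hf : IntervalIntegrable f volume 0 1) :
    AbsolutelyContinuousOnInterval (prim f) 0 1 :=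
  hf.absolutelyContinuousOnInterval_intervalIntegral (by simp)

lemma prim_contOn {f : ℝ → ℝ} (hf : IntervalIntegrable f volume 0 1) :
    ContinuousOn (prim f) (Icc 0 1) := by
  have := (prim_ac hf).continuousOn
  rwa [uIcc_of_le zero_le_one] at this

lemma memLp_of_contOn {f : ℝ → ℝ} (hf : ContinuousOn f (Icc 0 1)) : MemLp f 2 mu := by
  obtain ⟨C, hC⟩ := isCompact_Icc.exists_bound_of_continuousOn hf
  refine MemLp.of_bound ((hf.mono Ioo_subset_Icc_self).aestronglyMeasurable measurableSet_Ioo) C ?_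
  filter_upwards [ae_restrict_mem measurableSet_Ioo] with x hx
  exact hC x (Ioo_subset_Icc_self hx)

lemma prim_congr {f g : ℝ → ℝ} (h : f =ᵐ[mu] g) {x : ℝ} (hx : x ∈ Icc (0 : ℝ) 1) :
    prim f x = prim g x := by
  unfold prim
  rw [intervalIntegral.integral_of_le hx.1, intervalIntegral.integral_of_le hx.1,
    ← restrict_Ioo_eq_restrict_Ioc]
  exact integral_congr_ae (ae_restrict_of_ae_restrict_of_subset (Ioo_subset_Ioo_right hx.2) h)

def Jop : EL →ₗ[ℝ] EL where
  toFun f := (memLp_of_contOn (prim_contOn (II_of_memLp (Lp.memLp f)))).toLp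
  map_add' f g := by
    apply Lp.ext
    refine (MemLp.coeFn_toLp _).trans ?_
    refine Filter.EventuallyEq.trans ?_ (Lp.coeFn_add _ _).symm
    filter_upwards [MemLp.coeFn_toLp (memLp_of_contOn (prim_contOn (II_of_memLp (Lp.memLp f)))),
      MemLp.coeFn_toLp (memLp_of_contOn (prim_contOn (II_of_memLp (Lp.memLp g)))),
      ae_restrict_mem measurableSet_Ioo] with x h1 h2 hx
    have hx := Ioo_subset_Icc_self hx
    rw [Pi.add_apply, h1, h2, prim_congr (Lp.coeFn_add f g) hx]
    unfold prim
    exact intervalIntegral.integral_add (II_sub (II_of_memLp (Lp.memLp f)) (by simp) hx)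
      (II_sub (II_of_memLp (Lp.memLp g)) (by simp) hx)
  map_smul' c f := by
    apply Lp.ext
    refine (MemLp.coeFn_toLp _).trans ?_
    refine Filter.EventuallyEq.trans ?_ (Lp.coeFn_smul _ _).symm
    filter_upwards [MemLp.coeFn_toLp (memLp_of_contOn (prim_contOn (II_of_memLp (Lp.memLp f)))),
      ae_restrict_mem measurableSet_Ioo] with x h1 hx
    have hx := Ioo_subset_Icc_self hx
    simp only [RingHom.id_apply, Pi.smul_apply]
    rw [h1, prim_congr (Lp.coeFn_smul c f) hx]
    unfold prim
    exact intervalIntegral.integral_smul c _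

lemma Jop_coe (f : EL) : Jop f =ᵐ[mu] prim f :=
  MemLp.coeFn_toLp (memLp_of_contOn (prim_contOn (II_of_memLp (Lp.memLp f))))

def oneL : EL := MemLp.toLp (fun _ => (1 : ℝ)) (memLp_const 1)

lemma oneL_coe : oneL =ᵐ[mu] fun _ => (1 : ℝ) := MemLp.coeFn_toLp _

lemma innerL (f g : EL) : inner ℝ f g = ∫ x, f x * g x ∂mu := by
  rw [L2.inner_def]
  apply integral_congr_ae
  filter_upwards with x
  simp [mul_comm]

lemma normL (f : EL) : ‖f‖ ^ 2 = ∫ x, f x ^ 2 ∂mu := by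
  rw [← real_inner_self_eq_norm_sq, innerL]
  simp [sq]

lemma int_mu (f : ℝ → ℝ) : ∫ x, f x ∂mu = ∫ x in (0 : ℝ)..1, f x := by
  rw [intervalIntegral.integral_of_le zero_le_one, ← restrict_Ioo_eq_restrict_Ioc]

lemma oneL_norm : ‖oneL‖ = 1 := by
  have h := normL oneL
  have : ∫ x, oneL x ^ 2 ∂mu = 1 := by
    rw [integral_congr_ae (g := fun _ => (1 : ℝ)) ?_, int_mu]
    · simp
    · filter_upwards [oneL_coe] with x hx
      simp [hx]
  rw [this] at h
  nlinarith [norm_nonneg oneL]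

lemma inner_one_left (g : EL) : inner ℝ oneL g = prim g 1 := by
  rw [innerL, prim, ← int_mu]
  apply integral_congr_ae
  filter_upwards [oneL_coe] with x hx
  simp [hx]

lemma Jop_parts (f g : EL) :
    inner ℝ (Jop f) g + inner ℝ f (Jop g) = inner ℝ f oneL * inner ℝ oneL g := by
  rw [real_inner_comm oneL f, inner_one_left, inner_one_left, innerL, innerL]
  have hf := II_of_memLp (Lp.memLp f)
  have hg := II_of_memLp (Lp.memLp g)
  have h1 : ∫ x, Jop f x * g x ∂mu = ∫ x in (0:ℝ)..1, prim f x * deriv (prim g) x := by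
    rw [← int_mu]
    apply integral_congr_ae
    filter_upwards [Jop_coe f, ae_restrict_of_ae hg.ae_hasDerivAt_integral,
      ae_restrict_mem measurableSet_Ioo] with x h1 h2 h3
    rw [h1]
    congr 1
    exact (h2 (by rw [uIcc_of_le zero_le_one]; exact Ioo_subset_Icc_self h3) 0 (by simp)).deriv.symm
  have h2 : ∫ x, f x * Jop g x ∂mu = ∫ x in (0:ℝ)..1, deriv (prim f) x * prim g x := by
    rw [← int_mu]
    apply integral_congr_ae
    filter_upwards [Jop_coe g, ae_restrict_of_ae hf.ae_hasDerivAt_integral,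
      ae_restrict_mem measurableSet_Ioo] with x h1 h2 h3
    rw [h1]
    congr 1
    exact (h2 (by rw [uIcc_of_le zero_le_one]; exact Ioo_subset_Icc_self h3) 0 (by simp)).deriv.symm
  rw [h1, h2, (prim_ac hf).integral_mul_deriv_eq_deriv_mul (prim_ac hg)]
  have : prim f 0 = 0 := by simp [prim]
  rw [this]; ring

/-- Cell index. -/
def idx (n : ℕ) (x : ℝ) : Fin (n + 1) := ⟨min ⌊((n : ℝ) + 1) * x⌋₊ n, by omega⟩

lemma idx_meas (n : ℕ) : Measurable (idx n) := by
  have h : Measurable fun x : ℝ => ⌊((n : ℝ) + 1) * x⌋₊ :=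
    Nat.measurable_floor.comp (measurable_const.mul measurable_id)
  exact (measurable_of_countable
    (fun k : ℕ => (⟨min k n, by omega⟩ : Fin (n + 1)))).comp h

lemma pc_memLp (n : ℕ) (a : Fin (n + 1) → ℝ) : MemLp (fun x => a (idx n x)) 2 mu := by
  refine MemLp.of_bound ((measurable_of_countable a).comp (idx_meas n)).aestronglyMeasurable
    (∑ j, ‖a j‖) ?_
  filter_upwards with x
  exact Finset.single_le_sum (f := fun j => ‖a j‖) (fun _ _ => norm_nonneg _)
    (Finset.mem_univ (idx n x))

def Tm (n : ℕ) : (Fin (n + 1) → ℝ) →ₗ[ℝ] EL where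
  toFun a := (pc_memLp n a).toLp
  map_add' _ _ := rfl
  map_smul' _ _ := rfl

lemma Tm_coe (n : ℕ) (a : Fin (n + 1) → ℝ) : Tm n a =ᵐ[mu] fun x => a (idx n x) :=
  MemLp.coeFn_toLp (pc_memLp n a)

abbrev V0 (n : ℕ) : Submodule ℝ EL := LinearMap.range (Tm n)

lemma one_mem_V0 (n : ℕ) : oneL ∈ V0 n := ⟨fun _ => 1, rfl⟩

/-- knots -/
def kn (n j : ℕ) : ℝ := (j : ℝ) / ((n : ℝ) + 1)

lemma kn_mono (n : ℕ) {i j : ℕ} (h : i ≤ j) : kn n i ≤ kn n j := by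
  unfold kn; gcongr

lemma kn_mem (n j : ℕ) (hj : j ≤ n + 1) : kn n j ∈ Icc (0 : ℝ) 1 := by
  constructor
  · unfold kn; positivity
  · unfold kn
    rw [div_le_one (by positivity)]; exact_mod_cast hj

lemma kn_succ (n j : ℕ) : kn n (j + 1) = kn n j + 1 / ((n : ℝ) + 1) := by
  unfold kn; push_cast; ring

lemma idx_cell (n j : ℕ) (hj : j < n + 1) (x : ℝ) (hx : x ∈ Ioo (kn n j) (kn n (j + 1))) :
    idx n x = ⟨j, hj⟩ := by
  have hn : (0 : ℝ) < (n : ℝ) + 1 := by positivity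
  have h1 : ⌊((n : ℝ) + 1) * x⌋₊ = j := by
    have h2 := hx.1
    have h3 := hx.2
    unfold kn at h2 h3
    rw [div_lt_iff₀ hn] at h2
    rw [lt_div_iff₀ hn] at h3
    have : (0 : ℝ) ≤ j := by positivity
    push_cast at h3
    rw [Nat.floor_eq_iff (by linarith)]
    constructor <;> linarith
  unfold idx
  ext
  simp only [h1]
  omega

lemma sum_cells (n : ℕ) {f : ℝ → ℝ} (hf : IntervalIntegrable f volume 0 1) :
    ∫ x, f x ∂mu = ∑ j ∈ Finset.range (n + 1), ∫ x in kn n j..kn n (j + 1), f x := by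
  rw [intervalIntegral.sum_integral_adjacent_intervals (a := fun j => kn n j), int_mu]
  · congr 1
    · simp [kn]
    · simp only [kn]; push_cast; field_simp
  · intro k hk
    exact II_sub hf (kn_mem n k (by omega)) (kn_mem n (k + 1) (by omega))

lemma II_sq {f : ℝ → ℝ} (hf : MemLp f 2 mu) : IntervalIntegrable (fun x => f x ^ 2) volume 0 1 := by
  rw [intervalIntegrable_iff_integrableOn_Ioo_of_le zero_le_one]
  exact hf.integrable_sq

lemma cs_int {f : ℝ → ℝ} {a b : ℝ} (hab : a ≤ b) (hf : IntervalIntegrable f volume a b)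
    (hf2 : IntervalIntegrable (fun x => f x ^ 2) volume a b) :
    (∫ x in a..b, f x) ^ 2 ≤ (b - a) * ∫ x in a..b, f x ^ 2 := by
  rcases hab.eq_or_lt with rfl | hlt
  · simp
  set A := ∫ x in a..b, f x with hA
  set L := b - a with hL
  have hLp : 0 < L := by rw [hL]; linarith
  have h0 : 0 ≤ ∫ x in a..b, (f x - A / L) ^ 2 :=
    intervalIntegral.integral_nonneg hab fun x _ => sq_nonneg _
  have h1 : ∫ x in a..b, (f x - A / L) ^ 2 = (∫ x in a..b, f x ^ 2) - 2 * (A / L) * A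
      + (A / L) ^ 2 * L := by
    have : (fun x => (f x - A / L) ^ 2) = fun x => (f x ^ 2 - 2 * (A / L) * f x) + (A / L) ^ 2 := by
      ext x; ring
    rw [this, intervalIntegral.integral_add (hf2.sub (hf.const_mul _)) (by simp),
      intervalIntegral.integral_sub hf2 (hf.const_mul _), intervalIntegral.integral_const_mul,
      intervalIntegral.integral_const, smul_eq_mul]
    ring
  rw [h1] at h0
  have h2 : L * ((∫ x in a..b, f x ^ 2) - 2 * (A / L) * A + (A / L) ^ 2 * L)
      = L * (∫ x in a..b, f x ^ 2) - A ^ 2 := by field_simp; ring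
  have := mul_nonneg hLp.le h0
  linarith

lemma cell_approx (g : EL) (n j : ℕ) (hj : j < n + 1) (a : Fin (n + 1) → ℝ)
    (ha : a ⟨j, hj⟩ = prim g (kn n j)) :
    ∫ x in kn n j..kn n (j + 1), (prim g x - a (idx n x)) ^ 2 ≤
      (1 / ((n : ℝ) + 1)) ^ 2 * ∫ x in kn n j..kn n (j + 1), g x ^ 2 := by
  set h := 1 / ((n : ℝ) + 1) with hh
  have hle := kn_mono n (Nat.le_succ j)
  have hg := II_of_memLp (Lp.memLp g)
  have hg2 := II_sq (Lp.memLp g)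
  have hk0 := kn_mem n j (by omega)
  have hk1 := kn_mem n (j + 1) (by omega)
  set C := ∫ x in kn n j..kn n (j + 1), g x ^ 2 with hC
  have hC0 : 0 ≤ C := intervalIntegral.integral_nonneg hle fun x _ => sq_nonneg _
  have hpt : ∀ x ∈ Ioo (kn n j) (kn n (j + 1)), (prim g x - a (idx n x)) ^ 2 ≤ h * C := by
    intro x hx
    have hxI : x ∈ Icc (0 : ℝ) 1 := ⟨hk0.1.trans hx.1.le, hx.2.le.trans hk1.2⟩
    rw [idx_cell n j hj x hx, ha, prim_sub hg hk0 hxI, add_sub_cancel_left]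
    refine (cs_int hx.1.le (II_sub hg hk0 hxI) (II_sub hg2 hk0 hxI)).trans ?_
    have h1 : ∫ t in kn n j..x, g t ^ 2 ≤ C := by
      have h2 := intervalIntegral.integral_add_adjacent_intervals (II_sub hg2 hk0 hxI)
        (II_sub hg2 hxI hk1)
      have h3 : 0 ≤ ∫ t in x..kn n (j+1), g t ^ 2 :=
        intervalIntegral.integral_nonneg hx.2.le fun x _ => sq_nonneg _
      linarith
    have h2 : x - kn n j ≤ h := by
      have := kn_succ n j
      have := hx.2
      linarith
    have h3 : 0 ≤ ∫ t in kn n j..x, g t ^ 2 :=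
      intervalIntegral.integral_nonneg hx.1.le fun x _ => sq_nonneg _
    have : 0 ≤ h := by positivity
    gcongr
  rw [intervalIntegral.integral_of_le hle, ← restrict_Ioo_eq_restrict_Ioc]
  have h1 : ∫ x in Ioo (kn n j) (kn n (j+1)), (prim g x - a (idx n x)) ^ 2 ≤
      ∫ x in Ioo (kn n j) (kn n (j+1)), h * C := by
    apply integral_mono_of_nonneg
    · filter_upwards with x; positivity
    · exact integrable_const _
    · filter_upwards [ae_restrict_mem measurableSet_Ioo] with x hx using hpt x hx
  refine h1.trans ?_
  rw [setIntegral_const, kn_succ]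
  have : (0 : ℝ) ≤ h := by positivity
  simp [this, ← hh]
  apply le_of_eq; ring

theorem base_approx (n : ℕ) (g : EL) :
    ∃ v ∈ V0 n, ‖Jop g - v‖ ≤ 1 / ((n : ℝ) + 1) * ‖g‖ := by
  set a : Fin (n + 1) → ℝ := fun j => prim g (kn n j) with ha
  refine ⟨Tm n a, ⟨a, rfl⟩, ?_⟩
  apply abs_le_of_sq_le_sq' _ (by positivity) |>.2
  rw [mul_pow, normL, normL]
  have h1 : ∫ x, (Jop g - Tm n a : EL) x ^ 2 ∂mu = ∫ x, (prim g x - a (idx n x)) ^ 2 ∂mu := by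
    apply integral_congr_ae
    filter_upwards [Lp.coeFn_sub (Jop g) (Tm n a), Jop_coe g, Tm_coe n a] with x h1 h2 h3
    rw [h1, Pi.sub_apply, h2, h3]
  rw [h1, sum_cells n, sum_cells n (II_sq (Lp.memLp g)), Finset.mul_sum]
  · apply Finset.sum_le_sum
    intro j hj
    exact cell_approx g n j (Finset.mem_range.1 hj) a rfl
  · apply II_sq (f := fun x => prim g x - a (idx n x))
    exact (memLp_of_contOn (prim_contOn (II_of_memLp (Lp.memLp g)))).sub (pc_memLp n a)

lemma quad_int (b a x0 h : ℝ) (hh : 0 ≤ h) :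
    h ^ 2 / 12 * (a ^ 2 * h) ≤ ∫ x in x0..x0 + h, (b + a * (x - x0)) ^ 2 := by
  have h1 : ∫ x in x0..x0 + h, (b + a * (x - x0)) ^ 2 = ∫ x in (0:ℝ)..h, (b + a * x) ^ 2 := by
    rw [intervalIntegral.integral_comp_sub_right (fun x => (b + a * x) ^ 2) x0]
    simp
  have h2 : ∫ x in (0:ℝ)..h, (b + a * x) ^ 2 = b ^ 2 * h + a * b * h ^ 2 + a ^ 2 * h ^ 3 / 3 := by
    have : ∀ x ∈ uIcc 0 h, HasDerivAt (fun x : ℝ => b ^ 2 * x + a * b * x ^ 2 + a ^ 2 * x ^ 3 / 3)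
        ((b + a * x) ^ 2) x := by
      intro x _
      have h1 := (((hasDerivAt_id x).const_mul (b ^ 2)).add
        ((hasDerivAt_pow 2 x).const_mul (a * b))).add
        (((hasDerivAt_pow 3 x).const_mul (a ^ 2)).div_const 3)
      refine h1.congr_deriv ?_
      norm_num; ring
    rw [intervalIntegral.integral_eq_sub_of_hasDerivAt this]
    · simp
    · apply Continuous.intervalIntegrable; fun_prop
  rw [h1, h2]
  nlinarith [mul_nonneg hh (sq_nonneg (b + a * h / 2))]

theorem base_inv (n : ℕ) (c : ℝ) (g : EL) (hg : g ∈ V0 n) :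
    ‖g‖ ≤ (4 * ((n : ℝ) + 1)) * ‖c • oneL + Jop g‖ := by
  obtain ⟨a, rfl⟩ := hg
  apply abs_le_of_sq_le_sq' _ (by positivity) |>.2
  rw [mul_pow, normL, normL]
  set G : ℝ → ℝ := fun x => a (idx n x) with hG
  have hGI := II_of_memLp (pc_memLp n a)
  have h1 : ∫ x, (Tm n a) x ^ 2 ∂mu = ∫ x, G x ^ 2 ∂mu := by
    apply integral_congr_ae
    filter_upwards [Tm_coe n a] with x h1
    rw [h1]
  have h2 : ∫ x, (c • oneL + Jop (Tm n a) : EL) x ^ 2 ∂mu = ∫ x, (c + prim G x) ^ 2 ∂mu := by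
    apply integral_congr_ae
    filter_upwards [Lp.coeFn_add (c • oneL) (Jop (Tm n a)), Lp.coeFn_smul c oneL, oneL_coe,
      Jop_coe (Tm n a), ae_restrict_mem measurableSet_Ioo] with x h1 h2 h3 h4 h5
    rw [h1, Pi.add_apply, h2, Pi.smul_apply, h3, h4, prim_congr (Tm_coe n a) (Ioo_subset_Icc_self h5)]
    simp [hG]
  rw [h1, h2, sum_cells n (II_sq (pc_memLp n a)), sum_cells n, Finset.mul_sum]
  · apply Finset.sum_le_sum
    intro j hj
    have hj := Finset.mem_range.1 hj
    set h := 1 / ((n : ℝ) + 1) with hh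
    have hle := kn_mono n (Nat.le_succ j)
    have hk0 := kn_mem n j (by omega)
    have hk1 := kn_mem n (j + 1) (by omega)
    have e1 : ∫ x in kn n j..kn n (j + 1), G x ^ 2 = a ⟨j, hj⟩ ^ 2 * h := by
      rw [intervalIntegral.integral_congr_Ioo_of_le (g := fun _ => a ⟨j, hj⟩ ^ 2) hle, intervalIntegral.integral_const, kn_succ]
      · simp [hh]; ring
      · intro x hx
        simp only [hG]
        rw [idx_cell n j hj x hx]
    have e2 : ∫ x in kn n j..kn n (j + 1), (c + prim G x) ^ 2 =
        ∫ x in kn n j..kn n j + h, ((c + prim G (kn n j)) + a ⟨j, hj⟩ * (x - kn n j)) ^ 2 := by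
      rw [← kn_succ]
      apply intervalIntegral.integral_congr_Ioo_of_le hle
      intro x hx
      have hxI : x ∈ Icc (0 : ℝ) 1 := ⟨hk0.1.trans hx.1.le, hx.2.le.trans hk1.2⟩
      have : ∫ t in kn n j..x, G t = a ⟨j, hj⟩ * (x - kn n j) := by
        rw [intervalIntegral.integral_congr_Ioo_of_le (g := fun _ => a ⟨j, hj⟩) hx.1.le, intervalIntegral.integral_const]
        · simp [mul_comm]
        · intro t ht
          simp only [hG]
          rw [idx_cell n j hj t ⟨ht.1, ht.2.trans hx.2⟩]
      simp only []
      rw [prim_sub hGI hk0 hxI, this]; ring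
    rw [e1, e2]
    have := quad_int (c + prim G (kn n j)) (a ⟨j, hj⟩) (kn n j) h (by positivity)
    have h12 : (4 * ((n : ℝ) + 1)) ^ 2 * (h ^ 2 / 12 * (a ⟨j, hj⟩ ^ 2 * h)) =
      16 / 12 * (a ⟨j, hj⟩ ^ 2 * h) := by
      rw [hh]; field_simp; ring
    have h13 : 0 ≤ a ⟨j, hj⟩ ^ 2 * h := by positivity
    calc a ⟨j, hj⟩ ^ 2 * h ≤ 16 / 12 * (a ⟨j, hj⟩ ^ 2 * h) := by linarith
      _ = _ := h12.symm
      _ ≤ _ := by gcongr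
  · apply II_sq (f := fun x => c + prim G x)
    exact (memLp_const c).add (memLp_of_contOn (prim_contOn hGI))

theorem L2_main (n q : ℕ) (c c₂ : ℝ) (g g₂ : EL) (hg₂ : g₂ ∈ (VV Jop oneL (V0 n) q).2)
    (hproj : ∀ w ∈ (VV Jop oneL (V0 n) (q+1)).1,
      inner ℝ ((c • oneL + Jop g) - (c₂ • oneL + Jop g₂)) w = 0) :
    ‖g₂‖ ≤ 5 * ‖g‖ := by
  have := abs_main Jop oneL oneL_norm (V0 n) (one_mem_V0 n) (1 / ((n : ℝ) + 1)) (4 * ((n : ℝ) + 1))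
    (by positivity) (by positivity) Jop_parts (base_approx n) (base_inv n) q c c₂ g g₂ hg₂ hproj
  have h2 : 1 + 4 * ((n : ℝ) + 1) * (1 / ((n : ℝ) + 1)) = 5 := by field_simp; norm_num
  rwa [h2] at this

def oCell (n j : ℕ) : Set ℝ := {x | (j = 0 ∨ kn n j < x) ∧ (j = n ∨ x < kn n (j + 1))}

lemma mem_piece_s5 (n j : ℕ) (hj : j < n + 1) (x : ℝ) :
    x ∈ pieceSet (n + 1) j ↔ (j = 0 ∨ kn n j ≤ x) ∧ (j = n ∨ x ≤ kn n (j + 1)) := by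
  have hn : (0 : ℝ) < (n : ℝ) + 1 := by positivity
  have e1 : kn n j = (j : ℝ) / ((n + 1 : ℕ) : ℝ) := by simp [kn]
  have e2 : kn n (j + 1) = ((j : ℝ) + 1) / ((n + 1 : ℕ) : ℝ) := by simp [kn]
  have hlt : kn n j < kn n (j + 1) := by
    rw [kn_succ]; have : 0 < 1 / ((n : ℝ) + 1) := by positivity
    linarith
  unfold pieceSet
  by_cases h0 : j = 0 <;> by_cases h1 : j = n
  · subst h0; subst h1
    simp
    rcases le_total x 1 with h | h
    · exact Or.inl h
    · exact Or.inr (by linarith)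
  · subst h0
    have : ¬ (0 = n + 1 - 1) := by omega
    simp [h1, this, e2]
  · subst h1
    simp [h0, kn]
    intro h _; exact h
  · have : ¬ (j = n + 1 - 1) := by omega
    rw [if_neg h0, if_neg this, ← e1, ← e2]
    simp [h0, h1]

lemma oCell_sub (n j : ℕ) (hj : j < n + 1) : oCell n j ⊆ pieceSet (n + 1) j := by
  intro x hx
  rw [mem_piece_s5 n j hj]
  exact ⟨hx.1.imp id le_of_lt, hx.2.imp id le_of_lt⟩

lemma oCell_open (n j : ℕ) : IsOpen (oCell n j) := by
  apply IsOpen.inter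
  · exact (isOpen_const (p := j = 0)).union isOpen_Ioi
  · exact (isOpen_const (p := j = n)).union isOpen_Iio

lemma piece_closed (n j : ℕ) (hj : j < n + 1) : IsClosed (pieceSet (n + 1) j) := by
  have : pieceSet (n + 1) j = {x | (j = 0 ∨ kn n j ≤ x) ∧ (j = n ∨ x ≤ kn n (j + 1))} := by
    ext x; exact mem_piece_s5 n j hj x
  rw [this]
  apply IsClosed.inter
  · exact (isClosed_const (p := j = 0)).union isClosed_Ici
  · exact (isClosed_const (p := j = n)).union isClosed_Iic

lemma Ioo_sub_oCell (n j : ℕ) : Ioo (kn n j) (kn n (j + 1)) ⊆ oCell n j :=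
  fun _ hx => ⟨Or.inr hx.1, Or.inr hx.2⟩

lemma uIoo_sub_oCell (n j : ℕ) (hj : j < n + 1) {x y : ℝ} (hx : x ∈ pieceSet (n + 1) j)
    (hy : y ∈ pieceSet (n + 1) j) : uIoo x y ⊆ oCell n j := by
  rw [mem_piece_s5 n j hj] at hx hy
  intro z hz
  obtain ⟨h1, h2⟩ := hz
  refine ⟨?_, ?_⟩
  · by_cases h0 : j = 0
    · exact Or.inl h0
    · right
      have := hx.1.resolve_left h0
      have := hy.1.resolve_left h0
      exact lt_of_le_of_lt (le_min ‹_› ‹_›) h1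
  · by_cases h0 : j = n
    · exact Or.inl h0
    · right
      have := hx.2.resolve_left h0
      have := hy.2.resolve_left h0
      exact lt_of_lt_of_le h2 (max_le ‹_› ‹_›)

lemma kn_mem_piece (n j : ℕ) (hj : j < n + 1) : kn n j ∈ pieceSet (n + 1) j := by
  rw [mem_piece_s5 n j hj]
  exact ⟨Or.inr le_rfl, Or.inr (kn_mono n (Nat.le_succ j))⟩

lemma piece_uniqueDiff (n j : ℕ) (hj : j < n + 1) : UniqueDiffOn ℝ (pieceSet (n + 1) j) := by
  apply uniqueDiffOn_convex
  · rw [convex_iff_ordConnected]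
    constructor
    intro x hx y hy z hz
    rw [mem_piece_s5 n j hj] at hx hy ⊢
    exact ⟨hx.1.imp id fun h => h.trans hz.1, hy.2.imp id fun h => hz.2.trans h⟩
  · have hlt : kn n j < kn n (j + 1) := by
      rw [kn_succ]; have : 0 < 1 / ((n : ℝ) + 1) := by positivity
      linarith
    obtain ⟨x, hx⟩ := nonempty_Ioo.2 hlt
    exact ⟨x, interior_maximal (oCell_sub n j hj) (oCell_open n j) (Ioo_sub_oCell n j hx)⟩

lemma idx_le (n : ℕ) (x : ℝ) : ((idx n x : Fin (n+1)) : ℕ) < n + 1 := (idx n x).2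

lemma mem_piece_idx (n : ℕ) (x : ℝ) : x ∈ pieceSet (n + 1) (idx n x) := by
  have hn : (0 : ℝ) < (n : ℝ) + 1 := by positivity
  rw [mem_piece_s5 n _ (idx n x).2]
  constructor
  · by_cases h0 : ((idx n x : Fin (n+1)) : ℕ) = 0
    · exact Or.inl h0
    · right
      unfold kn
      rw [div_le_iff₀ hn]
      have h1 : ((idx n x : Fin (n+1)) : ℕ) ≤ ⌊((n : ℝ) + 1) * x⌋₊ := min_le_left _ _
      have h2 := (Nat.le_floor_iff' h0).1 h1
      linarith
  · by_cases h0 : ((idx n x : Fin (n+1)) : ℕ) = n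
    · exact Or.inl h0
    · right
      unfold kn
      rw [le_div_iff₀ hn]
      have h1 : ((idx n x : Fin (n+1)) : ℕ) = ⌊((n : ℝ) + 1) * x⌋₊ := by
        simp only [idx] at h0 ⊢; omega
      have h2 := Nat.lt_floor_add_one (((n : ℝ) + 1) * x)
      rw [← h1] at h2
      push_cast; linarith

lemma idx_oCell (n j : ℕ) (hj : j < n + 1) (x : ℝ) (hx : x ∈ oCell n j) :
    idx n x = ⟨j, hj⟩ := by
  have hn : (0 : ℝ) < (n : ℝ) + 1 := by positivity
  obtain ⟨h1, h2⟩ := hx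
  have h1' : j ≤ ⌊((n : ℝ) + 1) * x⌋₊ := by
    rcases h1 with h1 | h1
    · omega
    · unfold kn at h1
      rw [div_lt_iff₀ hn] at h1
      exact Nat.le_floor (by linarith)
  have h2' : j = n ∨ ⌊((n : ℝ) + 1) * x⌋₊ < j + 1 := by
    refine h2.imp id fun h2 => ?_
    unfold kn at h2
    rw [lt_div_iff₀ hn] at h2
    rw [Nat.floor_lt' (by omega)]
    linarith
  ext
  simp only [idx]
  omega

def knots (n : ℕ) : Set ℝ := range (kn n)

lemma mem_oCell_idx (n : ℕ) (x : ℝ) (hx : x ∉ knots n) : x ∈ oCell n (idx n x) := by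
  have h := mem_piece_idx n x
  rw [mem_piece_s5 n _ (idx n x).2] at h
  refine ⟨h.1.imp id fun h => lt_of_le_of_ne h ?_, h.2.imp id fun h => lt_of_le_of_ne h ?_⟩
  · intro e; exact hx ⟨_, e⟩
  · intro e; exact hx ⟨_, e.symm⟩

lemma knots_countable (n : ℕ) : (knots n).Countable := countable_range _

lemma ae_not_knot (n : ℕ) : ∀ᵐ x ∂mu, x ∉ knots n :=
  ae_restrict_of_ae ((knots_countable n).ae_notMem volume)

lemma spline_cont {n p : ℕ} {u : ℝ → ℝ} (hu : IsSpline (n + 1) p u) : Continuous u := by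
  have hl : LocallyFinite (fun j : Fin (n + 1) => pieceSet (n + 1) j) := locallyFinite_of_finite _
  refine hl.continuous ?_ (fun j => piece_closed n j j.2) ?_
  · rw [eq_univ_iff_forall]
    intro x
    exact mem_iUnion.2 ⟨idx n x, mem_piece_idx n x⟩
  · intro j
    obtain ⟨q, -, hq⟩ := hu.2 j j.2
    exact q.continuous.continuousOn.congr hq

lemma oCell_hasDeriv {n j : ℕ} (hj : j < n + 1) {u : ℝ → ℝ} {q : Polynomial ℝ}
    (hq : ∀ x ∈ pieceSet (n + 1) j, u x = q.eval x) {x : ℝ} (hx : x ∈ oCell n j) :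
    HasDerivAt u (q.derivative.eval x) x := by
  refine (q.hasDerivAt x).congr_of_eventuallyEq ?_
  filter_upwards [(oCell_open n j).mem_nhds hx] with y hy
  exact hq y (oCell_sub n j hj hy)

lemma spline_deriv_memLp {n p : ℕ} {u : ℝ → ℝ} (hu : IsSpline (n + 1) p u) :
    MemLp (deriv u) 2 mu := by
  choose q hq1 hq2 using fun j : Fin (n + 1) => hu.2 j j.2
  have hb : ∀ j, ∃ C, ∀ x ∈ Icc (0 : ℝ) 1, ‖(q j).derivative.eval x‖ ≤ C := fun j =>
    isCompact_Icc.exists_bound_of_continuousOn (q j).derivative.continuous.continuousOn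
  choose C hC using hb
  refine MemLp.of_bound (measurable_deriv u).aestronglyMeasurable (∑ j, |C j|) ?_
  filter_upwards [ae_not_knot n, ae_restrict_mem measurableSet_Ioo] with x hx hx2
  rw [(oCell_hasDeriv (idx n x).2 (hq2 (idx n x)) (mem_oCell_idx n x hx)).deriv]
  refine ((hC _ x (Ioo_subset_Icc_self hx2)).trans (le_abs_self _)).trans ?_
  exact Finset.single_le_sum (f := fun j => |C j|) (fun _ _ => abs_nonneg _)
    (Finset.mem_univ (idx n x))

lemma spline_ftc {n p : ℕ} {u : ℝ → ℝ} (hu : IsSpline (n + 1) p u) {x : ℝ}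
    (hx : x ∈ Icc (0 : ℝ) 1) : u x = u 0 + prim (deriv u) x := by
  unfold prim
  rw [integral_eq_of_hasDerivAt_off_countable_of_le u (deriv u) hx.1 (knots_countable n)
    (spline_cont hu).continuousOn ?_ (II_sub (II_of_memLp (spline_deriv_memLp hu)) (by simp) hx)]
  · ring
  · intro y hy
    obtain ⟨q, -, hq⟩ := hu.2 _ (idx n y).2
    exact (oCell_hasDeriv (idx n y).2 hq (mem_oCell_idx n y hy.2)).differentiableAt.hasDerivAt

lemma spline_repr {n p : ℕ} {u : ℝ → ℝ} (hu : IsSpline (n + 1) p u)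
    (hm : MemLp (deriv u) 2 mu) :
    (u 0 • oneL + Jop hm.toLp : EL) =ᵐ[mu] u := by
  filter_upwards [Lp.coeFn_add (u 0 • oneL) (Jop hm.toLp), Lp.coeFn_smul (u 0) oneL, oneL_coe,
      Jop_coe hm.toLp, ae_restrict_mem measurableSet_Ioo] with x h1 h2 h3 h4 h5
  have h5 := Ioo_subset_Icc_self h5
  rw [h1, Pi.add_apply, h2, Pi.smul_apply, h3, h4, prim_congr hm.coeFn_toLp h5, spline_ftc hu h5]
  simp

lemma spline_diff {n p : ℕ} (hp : 1 ≤ p) {u : ℝ → ℝ} (hu : IsSpline (n + 1) (p + 1) u) :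
    Differentiable ℝ u := by
  intro x
  have hn : (0 : ℝ) < (n : ℝ) + 1 := by positivity
  by_cases h0 : x ≤ 0
  · obtain ⟨q, -, hq⟩ := hu.2 0 (by omega)
    refine (oCell_hasDeriv (by omega) hq (x := x) ⟨Or.inl rfl, Or.inr ?_⟩).differentiableAt
    refine lt_of_le_of_lt h0 ?_
    unfold kn; positivity
  by_cases h1 : 1 ≤ x
  · obtain ⟨q, -, hq⟩ := hu.2 n (by omega)
    refine (oCell_hasDeriv (by omega) hq (x := x) ⟨Or.inr ?_, Or.inl rfl⟩).differentiableAt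
    refine lt_of_lt_of_le ?_ h1
    unfold kn
    rw [div_lt_one hn]; linarith
  · have h := hu.1.differentiableOn (n := ((p + 1 - 1 : ℕ) : WithTop ℕ∞))
      (by exact_mod_cast (by omega : p + 1 - 1 ≠ 0))
    exact (h x ⟨by linarith, by linarith⟩).differentiableAt
      (isOpen_Ioo.mem_nhds ⟨by linarith, by linarith⟩)

lemma spline_deriv {n p : ℕ} {u : ℝ → ℝ} (hu : IsSpline (n + 1) (p + 2) u) :
    IsSpline (n + 1) (p + 1) (deriv u) := by
  constructor
  · have h := hu.1
    have e : ((p + 2 - 1 : ℕ) : WithTop ℕ∞) = ((p + 1 - 1 : ℕ) : WithTop ℕ∞) + 1 := by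
      norm_cast
    rw [e, contDiffOn_succ_iff_deriv_of_isOpen isOpen_Ioo] at h
    exact h.2.2
  · intro j hj
    obtain ⟨q, hd, hq⟩ := hu.2 j hj
    refine ⟨q.derivative, ?_, ?_⟩
    · have := Polynomial.natDegree_derivative_le q
      omega
    · intro x hx
      have h1 := ((spline_diff (by omega) hu) x).hasDerivAt.hasDerivWithinAt (s := pieceSet (n+1) j)
      have h2 : HasDerivWithinAt u (q.derivative.eval x) (pieceSet (n+1) j) x :=
        (q.hasDerivWithinAt x _).congr hq (hq x hx)
      exact (piece_uniqueDiff n j hj x hx).eq_deriv _ h1 h2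

def IsSplineD (m p : ℕ) (u : ℝ → ℝ) : Prop :=
  IsSpline m p u ∧
  ∀ l : ℕ, 2 * l < p →
    iteratedDeriv (2 * l) u 0 = 0 ∧ iteratedDeriv (2 * l) u 1 = 0

lemma deriv0 {n p : ℕ} {u : ℝ → ℝ} (hu : IsSpline0 (n + 1) (p + 2) u) :
    IsSplineD (n + 1) (p + 1) (deriv u) := by
  refine ⟨spline_deriv hu.1, fun l hl => ?_⟩
  rw [← iteratedDeriv_succ']
  exact hu.2 l (by omega)

lemma derivD {n p : ℕ} {u : ℝ → ℝ} (hu : IsSplineD (n + 1) (p + 2) u) :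
    IsSpline0 (n + 1) (p + 1) (deriv u) := by
  refine ⟨spline_deriv hu.1, fun l hl => ?_⟩
  rw [← iteratedDeriv_succ']
  exact hu.2 (l + 1) (by omega)

lemma base_mem {n : ℕ} {u : ℝ → ℝ} (hu : IsSpline (n + 1) 1 u) (hm : MemLp (deriv u) 2 mu) :
    hm.toLp ∈ V0 n := by
  choose q hq1 hq2 using fun j : Fin (n + 1) => hu.2 j j.2
  refine ⟨fun j => (q j).derivative.eval 0, ?_⟩
  apply Lp.ext
  refine (Tm_coe n _).trans ?_
  filter_upwards [hm.coeFn_toLp, ae_not_knot n] with x hx h2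
  rw [hx, (oCell_hasDeriv (idx n x).2 (hq2 (idx n x)) (mem_oCell_idx n x h2)).deriv]
  have h3 := Polynomial.natDegree_derivative_le (q (idx n x))
  have h4 := hq1 (idx n x)
  rw [Polynomial.eq_C_of_natDegree_le_zero (p := (q (idx n x)).derivative) (by omega)]
  simp

lemma inner_zero {n p : ℕ} (hp : 0 < p) {u : ℝ → ℝ} (hu : IsSplineD (n + 1) p u)
    (hm : MemLp (deriv u) 2 mu) : inner ℝ oneL hm.toLp = 0 := by
  rw [inner_one_left, prim_congr hm.coeFn_toLp (by simp)]
  have h1 := spline_ftc hu.1 (x := 1) (by simp)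
  have h2 := hu.2 0 (by omega)
  simp only [mul_zero, iteratedDeriv_zero] at h2
  linarith [h2.1, h2.2]

theorem memVV (n q : ℕ) :
    (∀ u, IsSpline0 (n + 1) (q + 1) u → ∀ hm : MemLp (deriv u) 2 mu,
      hm.toLp ∈ (VV Jop oneL (V0 n) q).2) ∧
    (∀ u, IsSplineD (n + 1) (q + 1) u → ∀ hm : MemLp (deriv u) 2 mu,
      hm.toLp ∈ (VV Jop oneL (V0 n) q).1) := by
  induction q with
  | zero => exact ⟨fun u hu hm => base_mem hu.1 hm, fun u hu hm => base_mem hu.1 hm⟩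
  | succ q ih =>
    constructor
    · intro u hu hm
      have hd := deriv0 hu
      have hm2 := spline_deriv_memLp hd.1
      refine mem_VV2.2 ⟨_, ih.2 _ hd hm2, inner_zero (by omega) hd hm2, ?_⟩
      apply Lp.ext
      refine hm.coeFn_toLp.trans ?_
      have := spline_repr hd.1 hm2
      have h2 := hd.2 0 (by omega)
      simp only [mul_zero, iteratedDeriv_zero] at h2
      rw [h2.1, zero_smul, zero_add] at this
      exact this.symm
    · intro u hu hm
      have hd := derivD hu
      have hm2 := spline_deriv_memLp hd.1
      refine mem_VV1.2 ⟨deriv u 0, _, ih.1 _ hd hm2, ?_⟩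
      apply Lp.ext
      exact hm.coeFn_toLp.trans (spline_repr hd.1 hm2).symm

lemma exists_antideriv (p : ℕ) (Q : Polynomial ℝ) (hQ : Q.natDegree ≤ p) :
    ∃ A : Polynomial ℝ, A.derivative = Q ∧ A.natDegree ≤ p + 1 := by
  refine ⟨∑ i ∈ Finset.range (p + 1), Polynomial.C (Q.coeff i / (i + 1)) * Polynomial.X ^ (i + 1),
    ?_, ?_⟩
  · rw [Polynomial.derivative_sum]
    conv_rhs => rw [Q.as_sum_range_C_mul_X_pow' (n := p + 1) (by omega)]
    refine Finset.sum_congr rfl fun i _ => ?_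
    rw [Polynomial.derivative_C_mul_X_pow]
    congr 2
    push_cast
    field_simp
  · apply Polynomial.natDegree_sum_le_of_forall_le
    intro i hi
    have := Finset.mem_range.1 hi
    exact (Polynomial.natDegree_C_mul_X_pow_le _ _).trans (by omega)

lemma prim_pieces {n p : ℕ} {G : ℝ → ℝ} (c : ℝ) (hI : ∀ a b, IntervalIntegrable G volume a b)
    (hG : ∀ j < n + 1, ∃ q : Polynomial ℝ, q.natDegree ≤ p ∧ ∀ x ∈ oCell n j, G x = q.eval x) :
    ∀ j < n + 1, ∃ q : Polynomial ℝ, q.natDegree ≤ p + 1 ∧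
      ∀ x ∈ pieceSet (n + 1) j, c + prim G x = q.eval x := by
  intro j hj
  obtain ⟨Q, hd, hQ⟩ := hG j hj
  obtain ⟨A, hA, hAd⟩ := exists_antideriv p Q hd
  refine ⟨A + Polynomial.C (c + prim G (kn n j) - A.eval (kn n j)), ?_, ?_⟩
  · rw [Polynomial.natDegree_add_C]; exact hAd
  · intro x hx
    have h1 : prim G x = prim G (kn n j) + ∫ t in kn n j..x, G t := by
      unfold prim
      rw [intervalIntegral.integral_add_adjacent_intervals (hI _ _) (hI _ _)]
    have h2 : ∫ t in kn n j..x, G t = ∫ t in kn n j..x, A.derivative.eval t := by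
      apply intervalIntegral.integral_congr_uIoo
      intro t ht
      rw [hA]
      exact hQ t (uIoo_sub_oCell n j hj (kn_mem_piece n j hj) hx ht)
    rw [h1, h2, intervalIntegral.integral_eq_sub_of_hasDerivAt (f := fun t => A.eval t)
      (fun t _ => A.hasDerivAt t) (A.derivative.continuous.intervalIntegrable _ _)]
    simp; ring

lemma prim_spline_base (n : ℕ) (c : ℝ) (a : Fin (n + 1) → ℝ) :
    IsSpline (n + 1) 1 (fun x => c + prim (fun x => a (idx n x)) x) := by
  have hI : ∀ s t : ℝ, IntervalIntegrable (fun x => a (idx n x)) volume s t := by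
    intro s t
    refine (intervalIntegrable_const (c := ∑ j, ‖a j‖)).mono_fun
      ((measurable_of_countable a).comp (idx_meas n)).aestronglyMeasurable ?_
    filter_upwards with x
    refine le_trans ?_ (le_abs_self _)
    exact Finset.single_le_sum (f := fun j => ‖a j‖) (fun _ _ => norm_nonneg _)
      (Finset.mem_univ (idx n x))
  constructor
  · have : Continuous fun x => c + prim (fun x => a (idx n x)) x :=
      continuous_const.add (intervalIntegral.continuous_primitive hI 0)
    simpa using this.continuousOn
  · apply prim_pieces (p := 0) c hI
    intro j hj
    refine ⟨Polynomial.C (a ⟨j, hj⟩), by simp, fun x hx => ?_⟩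
    rw [idx_oCell n j hj x hx]; simp

lemma prim_deriv {G : ℝ → ℝ} (hG : Continuous G) (c x : ℝ) :
    HasDerivAt (fun x => c + prim G x) (G x) x := by
  have := (hG.integral_hasStrictDerivAt 0 x).hasDerivAt
  exact this.const_add c

lemma prim_spline (n p : ℕ) (c : ℝ) {G : ℝ → ℝ} (hG : IsSpline (n + 1) (p + 1) G) :
    IsSpline (n + 1) (p + 2) (fun x => c + prim G x) := by
  have hc := spline_cont hG
  constructor
  · have e : ((p + 2 - 1 : ℕ) : WithTop ℕ∞) = ((p + 1 - 1 : ℕ) : WithTop ℕ∞) + 1 := by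
      norm_cast
    rw [e, contDiffOn_succ_iff_deriv_of_isOpen isOpen_Ioo]
    refine ⟨fun x _ => (prim_deriv hc c x).differentiableAt.differentiableWithinAt, by simp, ?_⟩
    have : deriv (fun x => c + prim G x) = G := funext fun x => (prim_deriv hc c x).deriv
    rw [this]
    exact hG.1
  · apply prim_pieces (p := p + 1) c (fun a b => hc.intervalIntegrable a b)
    intro j hj
    obtain ⟨q, h1, h2⟩ := hG.2 j hj
    exact ⟨q, h1, fun x hx => h2 x (oCell_sub n j hj hx)⟩

lemma ae_repr (c : ℝ) (g : EL) {G : ℝ → ℝ} (h : g =ᵐ[mu] G) :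
    (c • oneL + Jop g : EL) =ᵐ[mu] fun x => c + prim G x := by
  filter_upwards [Lp.coeFn_add (c • oneL) (Jop g), Lp.coeFn_smul c oneL, oneL_coe,
      Jop_coe g, ae_restrict_mem measurableSet_Ioo] with x h1 h2 h3 h4 h5
  rw [h1, Pi.add_apply, h2, Pi.smul_apply, h3, h4, prim_congr h (Ioo_subset_Icc_self h5)]
  simp

lemma ae_repr' (g : EL) {G : ℝ → ℝ} (h : g =ᵐ[mu] G) :
    (Jop g : EL) =ᵐ[mu] fun x => 0 + prim G x := by
  have := ae_repr 0 g h
  rwa [zero_smul, zero_add] at this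

theorem reprVV (n q : ℕ) :
    (∀ w ∈ (VV Jop oneL (V0 n) (q + 1)).1, ∃ W, IsSpline0 (n + 1) (q + 1) W ∧ w =ᵐ[mu] W) ∧
    (∀ w ∈ (VV Jop oneL (V0 n) (q + 1)).2, ∃ W, IsSplineD (n + 1) (q + 1) W ∧ w =ᵐ[mu] W) := by
  induction q with
  | zero =>
    constructor
    · intro w hw
      obtain ⟨c, g, ⟨a, rfl⟩, rfl⟩ := mem_VV1.1 hw
      exact ⟨_, ⟨prim_spline_base n c a, fun l hl => by omega⟩, ae_repr c _ (Tm_coe n a)⟩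
    · intro w hw
      obtain ⟨g, ⟨a, rfl⟩, h0, rfl⟩ := mem_VV2.1 hw
      refine ⟨_, ⟨prim_spline_base n 0 a, fun l hl => ?_⟩, ae_repr' _ (Tm_coe n a)⟩
      obtain rfl : l = 0 := by omega
      rw [inner_one_left, prim_congr (Tm_coe n a) (by simp)] at h0
      simp [h0]
      simp [prim]
  | succ q ih =>
    constructor
    · intro w hw
      obtain ⟨c, g, hg, rfl⟩ := mem_VV1.1 hw
      obtain ⟨G, hG, hgG⟩ := ih.2 g hg
      refine ⟨_, ⟨prim_spline n q c hG.1, fun l hl => ?_⟩, ae_repr c _ hgG⟩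
      rw [iteratedDeriv_succ', 
        show deriv (fun x => c + prim G x) = G from
          funext fun x => (prim_deriv (spline_cont hG.1) c x).deriv]
      exact hG.2 l (by omega)
    · intro w hw
      obtain ⟨g, hg, h0, rfl⟩ := mem_VV2.1 hw
      obtain ⟨G, hG, hgG⟩ := ih.1 g hg
      refine ⟨_, ⟨prim_spline n q 0 hG.1, fun l hl => ?_⟩, ae_repr' _ hgG⟩
      cases l with
      | zero =>
        rw [inner_one_left, prim_congr hgG (by simp)] at h0
        simp [h0]
        simp [prim]
      | succ l =>
        rw [show 2 * (l + 1) = (2 * l + 1) + 1 by ring, iteratedDeriv_succ', 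
          show deriv (fun x => 0 + prim G x) = G from
            funext fun x => (prim_deriv (spline_cont hG.1) 0 x).deriv]
        exact hG.2 l (by omega)

lemma h1semi_eq {u : ℝ → ℝ} (hm : MemLp (deriv u) 2 mu) : h1semi u = ‖hm.toLp‖ := by
  unfold h1semi h1semiSq
  have : ∫ x in Ioo (0 : ℝ) 1, deriv u x ^ 2 = ‖hm.toLp‖ ^ 2 := by
    rw [normL]
    apply integral_congr_ae
    filter_upwards [hm.coeFn_toLp] with x hx
    rw [hx]
  rw [this, Real.sqrt_sq (norm_nonneg _)]

/-- estimate `eq:proof:thm:stable-1d`: there is a constant `c > 0`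
independent of the mesh size `h = 1/m` and the spline degree `p` such that the
`L²(0,1)`-orthogonal projector `Q₀` onto `S₀` is `H¹`-stable on the spline space `S`:
`|Q₀u|₁ ≤ c|u|₁` for all `u ∈ S`. -/
theorem h1_stability_L2proj :
    ∃ c : ℝ, 0 < c ∧ ∀ m p : ℕ, 1 ≤ m → 1 ≤ p →
      ∀ u v : ℝ → ℝ, IsSpline m p u → IsL2Proj0 m p u v →
        h1semi v ≤ c * h1semi u := by
  refine ⟨5, by norm_num, ?_⟩
  intro m p hm hp u v hu hv
  obtain ⟨n, rfl⟩ : ∃ n, m = n + 1 := ⟨m - 1, by omega⟩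
  obtain ⟨q, rfl⟩ : ∃ q, p = q + 1 := ⟨p - 1, by omega⟩
  have mu1 := spline_deriv_memLp hu
  have mv1 := spline_deriv_memLp hv.1.1
  rw [h1semi_eq mu1, h1semi_eq mv1]
  refine L2_main n q (u 0) (v 0) _ _ ((memVV n q).1 v hv.1 mv1) ?_
  intro w hw
  obtain ⟨W, hW, hwW⟩ := (reprVV n q).1 w hw
  refine Eq.trans ?_ (hv.2 W hW)
  rw [innerL, ip0]
  apply integral_congr_ae
  filter_upwards [hwW, spline_repr hu mu1, spline_repr hv.1.1 mv1,
    Lp.coeFn_sub (u 0 • oneL + Jop mu1.toLp) (v 0 • oneL + Jop mv1.toLp)] with x h1 h2 h3 h4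
  rw [h1, h4, Pi.sub_apply, h2, h3, Pi.sub_apply]

end SplineMG
end
end
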